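/- arXiv:2407.10150 — 4 statements merged into one kernel-verified Lean document; each statement's English description precedes it below -/
import Mathlib

section
/- Let n ≥ 3 and let φ : M_n(ℂ) → M_n(ℂ) be a (not necessarily linear, additive or continuous) map such that for any a, b ∈ M_n(ℂ) there is an algebra automorphism θ_{a,b} of M_n(ℂ) with φ(a) + φ(b) = θ_{a,b}(a + b). Then φ is either an algebra automorphism or an algebra anti-automorphism of M_n(ℂ). -/
/-- An algebra automorphism of a complex algebra: a bijective complex-linear map
which is multiplicative. -/
def IsAlgAutomorphism {A : Type*} [Ring A] [Algebra ℂ A] (θ : A → A) : Prop :=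
  Function.Bijective θ ∧ IsLinearMap ℂ θ ∧ ∀ a b : A, θ (a * b) = θ a * θ b

/-- An algebra anti-automorphism of a complex algebra: a bijective complex-linear map
which reverses multiplication. -/
def IsAlgAntiAutomorphism {A : Type*} [Ring A] [Algebra ℂ A] (θ : A → A) : Prop :=
  Function.Bijective θ ∧ IsLinearMap ℂ θ ∧ ∀ a b : A, θ (a * b) = θ b * θ a

section Helpers

/-- An automorphism in the sense above preserves the trace. -/
lemma trace_of_isAlgAutomorphism {n : ℕ} (θ : Matrix (Fin n) (Fin n) ℂ → Matrix (Fin n) (Fin n) ℂ)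
    (h : IsAlgAutomorphism θ) (x : Matrix (Fin n) (Fin n) ℂ) : (θ x).trace = x.trace := by
  obtain ⟨hb, hl, hm⟩ := h
  have h1 : θ 1 = 1 := by
    obtain ⟨y, hy⟩ := hb.2 1
    have h2 := hm 1 y
    rw [one_mul, hy, mul_one] at h2
    exact h2.symm
  let f : Matrix (Fin n) (Fin n) ℂ →ₐ[ℂ] Matrix (Fin n) (Fin n) ℂ :=
    AlgHom.ofLinearMap (hl.mk' θ) h1 hm
  exact Matrix.trace_map (AlgEquiv.ofBijective f hb) x

section Jordan

variable {R : Type*} [Ring R] [Algebra ℂ R]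

lemma jordan_two (f : R →ₗ[ℂ] R) (J : ∀ x, f (x * x) = f x * f x) (x y : R) :
    f (x * y) + f (y * x) = f x * f y + f y * f x := by
  have h := J (x + y)
  simp only [add_mul, mul_add, map_add, J] at h
  linear_combination (norm := noncomm_ring) h

lemma jordan_three (f : R →ₗ[ℂ] R) (J : ∀ x, f (x * x) = f x * f x) (x y : R) :
    f (x * y * x) = f x * f y * f x := by
  have h1 := jordan_two f J x (x * y + y * x)
  have h2 := jordan_two f J (x * x) y
  have h3 := jordan_two f J x y
  have h4 : f (x * y + y * x) = f x * f y + f y * f x := by rw [map_add, h3]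
  rw [h4] at h1
  rw [J] at h2
  simp only [add_mul, mul_add, map_add, mul_assoc] at h1 h2
  have h5 : (2 : ℂ) • f (x * y * x) = (2 : ℂ) • (f x * f y * f x) := by
    simp only [two_smul, mul_assoc]
    linear_combination (norm := noncomm_ring) h1 - h2
  exact smul_right_injective R (two_ne_zero : (2 : ℂ) ≠ 0) h5

lemma jordan_four (f : R →ₗ[ℂ] R) (J : ∀ x, f (x * x) = f x * f x) (x y z : R) :
    f (x * y * z) + f (z * y * x) = f x * f y * f z + f z * f y * f x := by
  have h := jordan_three f J (x + z) y
  simp only [add_mul, mul_add, map_add, jordan_three f J] at h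
  linear_combination (norm := noncomm_ring) h

/-- Herstein's identity. -/
lemma jordan_key (f : R →ₗ[ℂ] R) (J : ∀ x, f (x * x) = f x * f x) (a b x : R) :
    (f (a * b) - f a * f b) * f x * (f (a * b) - f b * f a)
      + (f (a * b) - f b * f a) * f x * (f (a * b) - f a * f b) = 0 := by
  have h1 := jordan_four f J (a * b) x (b * a)
  have h2 : f (a * b * x * (b * a)) = f a * (f b * f x * f b) * f a := by
    rw [← jordan_three f J, ← jordan_three f J]; simp only [mul_assoc]
  have h3 : f (b * a * x * (a * b)) = f b * (f a * f x * f a) * f b := by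
    rw [← jordan_three f J, ← jordan_three f J]; simp only [mul_assoc]
  have h4 : f (b * a) = f a * f b + f b * f a - f (a * b) :=
    eq_sub_of_add_eq' (jordan_two f J a b)
  rw [h2, h3, h4] at h1
  linear_combination (norm := noncomm_ring) h1

end Jordan

lemma eq_zero_or_of_key {n : ℕ} (A B : Matrix (Fin n) (Fin n) ℂ)
    (h : ∀ x, A * x * B + B * x * A = 0) : A = 0 ∨ B = 0 := by
  have h1 : ∀ i j k l, A i j * B k l + B i j * A k l = 0 := by
    intro i j k l
    have h2 := congrFun (congrFun (h (Matrix.single j k 1)) i) l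
    simpa [Matrix.add_apply, Matrix.mul_apply, Matrix.single_apply, ite_and, Finset.sum_ite_eq]
      using h2
  by_contra! hc
  obtain ⟨hA, hB⟩ := hc
  apply hB
  have : ∃ i j, A i j ≠ 0 := by
    by_contra! h3
    exact hA (by ext i j; exact h3 i j)
  obtain ⟨i, j, hij⟩ := this
  have hBij : B i j = 0 := by
    have h3 : 2 * A i j * B i j = 0 := by linear_combination h1 i j i j
    simpa [hij] using h3
  ext k l
  have h4 := h1 i j k l
  rw [hBij] at h4
  simpa [hij] using h4

/-- If two biadditive-type alternatives hold pointwise, then one holds globally. -/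
lemma all_or_all {G : Type*} [AddCommGroup G] (S T : G → AddSubgroup G)
    (hS : ∀ b, ∃ S' : AddSubgroup G, ∀ a, a ∈ S' ↔ b ∈ S a)
    (hT : ∀ b, ∃ T' : AddSubgroup G, ∀ a, a ∈ T' ↔ b ∈ T a)
    (h : ∀ a b, b ∈ S a ∨ b ∈ T a) : (∀ a b, b ∈ S a) ∨ (∀ a b, b ∈ T a) := by
  have h1 : ∀ a, (∀ b, b ∈ S a) ∨ (∀ b, b ∈ T a) := by
    intro a
    have h2 : ((⊤ : AddSubgroup G) : Set G) ⊆ (S a : Set G) ∪ (T a : Set G) :=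
      fun b _ => h a b
    rcases AddSubgroupClass.subset_union.1 h2 with h3 | h3
    · exact Or.inl fun b => h3 trivial
    · exact Or.inr fun b => h3 trivial
  choose S' hS' using hS
  choose T' hT' using hT
  have h2 : ((⊤ : AddSubgroup G) : Set G) ⊆
      ((⨅ b, S' b : AddSubgroup G) : Set G) ∪ ((⨅ b, T' b : AddSubgroup G) : Set G) := by
    intro a _
    rcases h1 a with h3 | h3
    · exact Or.inl (AddSubgroup.mem_iInf.2 fun b => (hS' b a).2 (h3 b))
    · exact Or.inr (AddSubgroup.mem_iInf.2 fun b => (hT' b a).2 (h3 b))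
  rcases AddSubgroupClass.subset_union.1 h2 with h3 | h3
  · exact Or.inl fun a b => (hS' b a).1 (AddSubgroup.mem_iInf.1 (h3 trivial) b)
  · exact Or.inr fun a b => (hT' b a).1 (AddSubgroup.mem_iInf.1 (h3 trivial) b)

end Helpers

theorem stmt0 (n : ℕ) (hn : 3 ≤ n)
    (φ : Matrix (Fin n) (Fin n) ℂ → Matrix (Fin n) (Fin n) ℂ)
    (hφ : ∀ a b : Matrix (Fin n) (Fin n) ℂ,
      ∃ θ : Matrix (Fin n) (Fin n) ℂ → Matrix (Fin n) (Fin n) ℂ,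
        IsAlgAutomorphism θ ∧ φ a + φ b = θ (a + b)) :
    IsAlgAutomorphism φ ∨ IsAlgAntiAutomorphism φ := by
  have tr : ∀ a b (k : ℕ), ((φ a + φ b) ^ k).trace = ((a + b) ^ k).trace := by
    intro a b k
    obtain ⟨θ, hθ, he⟩ := hφ a b
    rcases k with _ | k
    · simp
    have hp : θ ((a + b) ^ (k + 1)) = θ (a + b) ^ (k + 1) := by
      induction k with
      | zero => simp
      | succ m ih => rw [pow_succ, hθ.2.2, ih, ← pow_succ]
    rw [he, ← hp, trace_of_isAlgAutomorphism θ hθ]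
  have tr1 : ∀ a (k : ℕ), (φ a ^ k).trace = (a ^ k).trace := by
    intro a k
    have h := tr a a k
    rw [← two_smul ℂ, ← two_smul ℂ, smul_pow, smul_pow, Matrix.trace_smul, Matrix.trace_smul] at h
    exact smul_right_injective ℂ (pow_ne_zero k (two_ne_zero : (2 : ℂ) ≠ 0)) h
  have form : ∀ a b, (φ a * φ b).trace = (a * b).trace := by
    intro a b
    have h := tr a b 2
    have ha := tr1 a 2
    have hb := tr1 b 2
    simp only [pow_two, add_mul, mul_add, Matrix.trace_add] at h ha hb
    rw [Matrix.trace_mul_comm (φ b) (φ a), Matrix.trace_mul_comm b a] at h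
    linear_combination (h - ha - hb) / 2
  let B := Matrix.stdBasis ℂ (Fin n) (Fin n)
  let L : Matrix (Fin n) (Fin n) ℂ →ₗ[ℂ] Matrix (Fin n) (Fin n) ℂ := B.constr ℂ (fun i => φ (B i))
  have hL : ∀ a x, (φ a * L x).trace = (a * x).trace := by
    intro a x
    have h : (Matrix.traceLinearMap (Fin n) ℂ ℂ) ∘ₗ (LinearMap.mulLeft ℂ (φ a)) ∘ₗ L
        = (Matrix.traceLinearMap (Fin n) ℂ ℂ) ∘ₗ (LinearMap.mulLeft ℂ a) := by
      apply B.ext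
      intro i
      simp [L, form]
    exact LinearMap.congr_fun h x
  have hLinj : Function.Injective L := by
    rw [injective_iff_map_eq_zero]
    intro x hx
    rw [Matrix.ext_iff_trace_mul_left]
    intro a
    rw [← hL, hx]
    simp
  have hLsurj : Function.Surjective L := LinearMap.injective_iff_surjective.1 hLinj
  have hlin : IsLinearMap ℂ φ := by
    constructor
    · intro a b
      rw [Matrix.ext_iff_trace_mul_right]
      intro y
      obtain ⟨x, rfl⟩ := hLsurj y
      simp only [add_mul, Matrix.trace_add, hL]
    · intro c a
      rw [Matrix.ext_iff_trace_mul_right]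
      intro y
      obtain ⟨x, rfl⟩ := hLsurj y
      simp only [Matrix.smul_mul, Matrix.trace_smul, hL]
  obtain ⟨f, rfl⟩ : ∃ f : Matrix (Fin n) (Fin n) ℂ →ₗ[ℂ] Matrix (Fin n) (Fin n) ℂ, φ = f :=
    ⟨hlin.mk' φ, rfl⟩
  have hinj : Function.Injective f := by
    intro a b hab
    rw [Matrix.ext_iff_trace_mul_right]
    intro x
    rw [← hL, hab, hL]
  have hsurj : Function.Surjective f := LinearMap.injective_iff_surjective.1 hinj
  have cube : ∀ x b : Matrix (Fin n) (Fin n) ℂ, ((x + b) ^ 3).trace - ((x - b) ^ 3).trace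
      = 6 * (x * x * b).trace + 2 * (b ^ 3).trace := by
    intro x b
    have e : (x + b) ^ 3 - (x - b) ^ 3
        = (x * x * b + x * x * b) + (x * b * x + x * b * x) + (b * x * x + b * x * x)
          + (b ^ 3 + b ^ 3) := by noncomm_ring
    rw [← Matrix.trace_sub, e]
    simp only [Matrix.trace_add]
    rw [Matrix.trace_mul_cycle b x x, Matrix.trace_mul_cycle x b x]
    ring
  have J : ∀ x, f (x * x) = f x * f x := by
    intro x
    rw [Matrix.ext_iff_trace_mul_right]
    intro y
    obtain ⟨b, rfl⟩ := hsurj y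
    rw [form]
    have h1 := cube x b
    have h2 := cube (f x) (f b)
    rw [← map_add, ← map_sub, tr1, tr1, tr1] at h2
    linear_combination (h2 - h1) / 6
  have key : ∀ a b, f (a * b) = f a * f b ∨ f (a * b) = f b * f a := by
    intro a b
    have h : f (a * b) - f a * f b = 0 ∨ f (a * b) - f b * f a = 0 := by
      apply eq_zero_or_of_key
      intro y
      obtain ⟨x, rfl⟩ := hsurj y
      exact jordan_key f J a b x
    exact h.imp sub_eq_zero.1 sub_eq_zero.1
  let ml := LinearMap.mul ℂ (Matrix (Fin n) (Fin n) ℂ)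
  let P := ml.compr₂ f - ml.compl₁₂ f f
  let Q := ml.compr₂ f - ml.flip.compl₁₂ f f
  have hP : ∀ a b, P a b = f (a * b) - f a * f b := fun a b => rfl
  have hQ : ∀ a b, Q a b = f (a * b) - f b * f a := fun a b => rfl
  have fin := all_or_all (fun a => (LinearMap.ker (P a)).toAddSubgroup)
    (fun a => (LinearMap.ker (Q a)).toAddSubgroup)
    (fun b => ⟨(LinearMap.ker (P.flip b)).toAddSubgroup, fun a => Iff.rfl⟩)
    (fun b => ⟨(LinearMap.ker (Q.flip b)).toAddSubgroup, fun a => Iff.rfl⟩)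
    (fun a b => (key a b).imp (fun h => by
        change P a b = 0
        rw [hP, h, sub_self]) (fun h => by
        change Q a b = 0
        rw [hQ, h, sub_self]))
  rcases fin with h | h
  · exact Or.inl ⟨⟨hinj, hsurj⟩, hlin, fun a b => sub_eq_zero.1 (h a b)⟩
  · exact Or.inr ⟨⟨hinj, hsurj⟩, hlin, fun a b => sub_eq_zero.1 (h a b)⟩
end

section
/- Let A be a standard operator algebra on a complex Banach space E, and let φ : A → B(E) be a (not necessarily linear, additive or continuous) map such that for any a, b ∈ A there is a complex-linear map D_{a,b} : A → B(E) satisfying D_{a,b}(xy) = D_{a,b}(x)y + xD_{a,b}(y) for all x, y ∈ A, with φ(a)b + aφ(b) = D_{a,b}(ab). Then φ is a linear derivation, i.e., φ is complex-linear and φ(ab) = φ(a)b + aφ(b) for all a, b ∈ A. -/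
set_option synthInstance.maxHeartbeats 1000000
set_option maxHeartbeats 1000000
open Cardinal

theorem aux_avoid {V W ι : Type*} [AddCommGroup V] [Module ℂ V] [AddCommGroup W] [Module ℂ W]
    [Finite ι] (L : ι → V →ₗ[ℂ] W) (hL : ∀ i, L i ≠ 0) : ∃ v, ∀ i, L i v ≠ 0 := by
  by_contra! hcon
  have h : (⋃ i, ((LinearMap.ker (L i) : Submodule ℂ V) : Set V)) = Set.univ := by
    ext v
    simpa using hcon v
  obtain ⟨i, hi⟩ := Subspace.exists_eq_top_of_iUnion_eq_univ h
  exact hL i (LinearMap.ker_eq_top.mp hi)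

theorem aux_mul {E : Type*} [NormedAddCommGroup E] [NormedSpace ℂ E]
    (S T : E →L[ℂ] E) (x : E) : (S * T) x = S (T x) := rfl

theorem aux_rank {E : Type*} [NormedAddCommGroup E] [NormedSpace ℂ E]
    (g : E →L[ℂ] ℂ) (y : E) :
    LinearMap.rank ((g.smulRight y : E →L[ℂ] E) : E →ₗ[ℂ] E) < ℵ₀ := by
  have : LinearMap.range ((g.smulRight y : E →L[ℂ] E) : E →ₗ[ℂ] E) ≤ Submodule.span ℂ {y} := by
    rintro _ ⟨z, rfl⟩
    exact Submodule.smul_mem _ _ (Submodule.mem_span_singleton_self y)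
  refine lt_of_le_of_lt (Submodule.rank_mono this) ?_
  exact Module.rank_lt_aleph0 ℂ _

theorem aux_sep {E : Type*} [NormedAddCommGroup E] [NormedSpace ℂ E] (y : E) (hy : y ≠ 0) :
    ∃ k : E →L[ℂ] ℂ, k y = 1 := by
  obtain ⟨k, hk⟩ := SeparatingDual.exists_eq_one (R := ℂ) hy
  exact ⟨k, hk⟩

/-- if linear combination identity holds for generic functionals and vectors, it holds -/
theorem aux_generic {E ι : Type*} [NormedAddCommGroup E] [NormedSpace ℂ E] [Finite ι]
    (a : ι → (E →L[ℂ] E)) (ha : ∀ i, a i ≠ 0) (S : E →L[ℂ] E)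
    (h : ∀ (y : E) (g : E →L[ℂ] ℂ), (∀ i, g (a i y) ≠ 0) → g (S y) = 0) : S = 0 := by
  by_contra hS
  let a' : Option ι → (E →L[ℂ] E) := fun o => o.elim S a
  have ha' : ∀ i, a' i ≠ 0 := by
    rintro (_ | i)
    · exact hS
    · exact ha i
  obtain ⟨y, hy⟩ := aux_avoid (fun i => ((a' i : E →L[ℂ] E) : E →ₗ[ℂ] E))
    (fun i hi => ha' i (by ext z; exact LinearMap.congr_fun hi z))
  obtain ⟨g, hg⟩ := aux_avoid (V := E →L[ℂ] ℂ) (W := ℂ)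
    (fun i => { toFun := fun g => g (a' i y), map_add' := fun _ _ => rfl,
                map_smul' := fun _ _ => rfl }) (fun i hi => by
      obtain ⟨k, hk⟩ := aux_sep _ (hy i)
      have := LinearMap.congr_fun hi k
      change k (a' i y) = 0 at this
      change k (a' i y) = 1 at hk
      rw [this] at hk
      exact zero_ne_one hk)
  exact hg none (h y g (fun i => hg (some i)))

theorem aux_key {E : Type*} [NormedAddCommGroup E] [NormedSpace ℂ E]
    (A : Subalgebra ℂ (E →L[ℂ] E))
    (hA : ∀ T : E →L[ℂ] E, LinearMap.rank (T : E →ₗ[ℂ] E) < ℵ₀ → T ∈ A)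
    (φ : A → (E →L[ℂ] E))
    (hloc : ∀ a : A, ∃ D : A → (E →L[ℂ] E), IsLinearMap ℂ D ∧
      (∀ x y : A, D (x * y) = D x * (y : E →L[ℂ] E) + (x : E →L[ℂ] E) * D y) ∧ φ a = D a)
    (hφ : ∀ a b : A, ∃ D : A → (E →L[ℂ] E), IsLinearMap ℂ D ∧
      (∀ x y : A, D (x * y) = D x * (y : E →L[ℂ] E) + (x : E →L[ℂ] E) * D y) ∧
      φ a * (b : E →L[ℂ] E) + (a : E →L[ℂ] E) * φ b = D (a * b))
    (y : E) (g : E →L[ℂ] ℂ) :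
    ∃ (u : E) (h : E →L[ℂ] ℂ), ∀ a : A, g ((a : E →L[ℂ] E) y) ≠ 0 →
      g (φ a y) = - (g ((a : E →L[ℂ] E) u) + h ((a : E →L[ℂ] E) y)) := by
  by_cases hy : y = 0
  · exact ⟨0, 0, fun a ha => by simp [hy] at ha⟩
  by_cases hg : g = 0
  · exact ⟨0, 0, fun a ha => by simp [hg] at ha⟩
  obtain ⟨k, hk⟩ := aux_sep y hy
  obtain ⟨w, hw⟩ : ∃ w, g w = 1 := by
    obtain ⟨w, hw⟩ := DFunLike.ne_iff.mp hg
    refine ⟨(g w)⁻¹ • w, ?_⟩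
    have : g w ≠ 0 := hw
    simp [this]
  let b : A := ⟨g.smulRight y, hA _ (aux_rank g y)⟩
  let q : A := ⟨k.smulRight w, hA _ (aux_rank k w)⟩
  have hbz : ∀ z, (b : E →L[ℂ] E) z = g z • y := fun z => rfl
  have hqz : ∀ z, (q : E →L[ℂ] E) z = k z • w := fun z => rfl
  obtain ⟨D, -, hD, hDb⟩ := hloc b
  have hbqb : b = b * (q * b) := by
    apply Subtype.ext
    ext z
    simp [hbz, hqz, hk, hw]
  have hφb : ∀ z, φ b z = g z • φ b w + g (D (q * b) z) • y := by
    intro z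
    have h1 := hD b (q * b)
    rw [← hbqb, ← hDb] at h1
    have h2 := congrArg (fun T : E →L[ℂ] E => T z) h1
    simpa [hbz, hqz, hk] using h2
  refine ⟨φ b w, g.comp (D (q * b)), fun a ha => ?_⟩
  obtain ⟨D', hl', hD', hab⟩ := hφ a b
  set c : A := a * b with hc
  have hcz : ∀ z, (c : E →L[ℂ] E) z = g z • (a : E →L[ℂ] E) y := by
    intro z
    simp [hc, hbz]
  have hcc : c * c = g ((a : E →L[ℂ] E) y) • c := by
    apply Subtype.ext
    ext z
    simp [hcz, smul_smul, mul_comm]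
  have h1 := hD' c c
  rw [hcc, hl'.map_smul] at h1
  have h2 := congrArg (fun T : E →L[ℂ] E => (c : E →L[ℂ] E) (T w)) h1
  simp only [_root_.smul_apply, _root_.add_apply,
    aux_mul, hcz, map_add, map_smul, hw, one_smul, add_smul,
    smul_eq_mul] at h2
  have hay : (a : E →L[ℂ] E) y ≠ 0 := fun h => ha (by rw [h, map_zero])
  have h3 : g (D' c ((a : E →L[ℂ] E) y)) = 0 := by
    have : g (D' c ((a : E →L[ℂ] E) y)) • (a : E →L[ℂ] E) y = 0 := by
      rw [mul_comm] at h2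
      simpa using h2
    exact (smul_eq_zero.mp this).resolve_right hay
  rw [← hab] at h3
  simp only [_root_.add_apply, aux_mul, hbz, hφb ((a : E →L[ℂ] E) y), map_add, map_smul, smul_eq_mul] at h3
  simp only [ContinuousLinearMap.comp_apply]
  apply mul_left_cancel₀ ha
  linear_combination h3

theorem stmt2 {E : Type*} [NormedAddCommGroup E] [NormedSpace ℂ E] [CompleteSpace E]
    (A : Subalgebra ℂ (E →L[ℂ] E))
    -- `A` is a standard operator algebra: it contains every bounded finite-rank operator
    (hA : ∀ T : E →L[ℂ] E, LinearMap.rank (T : E →ₗ[ℂ] E) < ℵ₀ → T ∈ A)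
    (φ : A → (E →L[ℂ] E))
    -- operational 2-local derivation condition
    (hφ : ∀ a b : A, ∃ D : A → (E →L[ℂ] E), IsLinearMap ℂ D ∧
      (∀ x y : A, D (x * y) = D x * (y : E →L[ℂ] E) + (x : E →L[ℂ] E) * D y) ∧
      φ a * (b : E →L[ℂ] E) + (a : E →L[ℂ] E) * φ b = D (a * b)) :
    IsLinearMap ℂ φ ∧
      ∀ a b : A, φ (a * b) = φ a * (b : E →L[ℂ] E) + (a : E →L[ℂ] E) * φ b := by
  have h1 : φ 1 = 0 := by
    obtain ⟨D, hl, hD, h⟩ := hφ 1 1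
    have h2 := hD 1 1
    simp only [mul_one, OneMemClass.coe_one, one_mul] at h2 h
    have h3 : D 1 = 0 := by simpa using h2
    rw [h3] at h
    have : (2 : ℂ) • φ 1 = 0 := by rw [two_smul, h]
    exact (smul_eq_zero.mp this).resolve_left two_ne_zero
  have hloc : ∀ a : A, ∃ D : A → (E →L[ℂ] E), IsLinearMap ℂ D ∧
      (∀ x y : A, D (x * y) = D x * (y : E →L[ℂ] E) + (x : E →L[ℂ] E) * D y) ∧ φ a = D a := by
    intro a
    obtain ⟨D, hl, hD, h⟩ := hφ a 1
    refine ⟨D, hl, hD, ?_⟩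
    simpa [h1] using h
  have h0 : φ 0 = 0 := by
    obtain ⟨D, hl, hD, h⟩ := hloc 0
    rw [h, hl.map_zero]
  have hzero : ∀ a b : A, a * b = 0 →
      φ a * (b : E →L[ℂ] E) + (a : E →L[ℂ] E) * φ b = 0 := by
    intro a b hab
    obtain ⟨D, hl, hD, h⟩ := hφ a b
    rw [h, hab, hl.map_zero]
  have key := aux_key A hA φ hloc hφ
  have hsmul : ∀ (t : ℂ) (a : A), φ (t • a) = t • φ a := by
    intro t a
    by_cases ht : t = 0
    · simp [ht, h0]
    by_cases ha : a = 0
    · simp [ha, h0]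
    rw [← sub_eq_zero]
    refine aux_generic (ι := Unit) (fun _ => (a : E →L[ℂ] E)) (fun _ h => ha (Subtype.ext h)) _ ?_
    intro y g hg
    obtain ⟨u, h, hk⟩ := key y g
    have e1 := hk a (hg ())
    have e2 := hk (t • a) (by simpa [ht] using hg ())
    simp only [_root_.sub_apply, map_sub, _root_.smul_apply, map_smul,
      smul_eq_mul, SetLike.val_smul, e1] at e2 ⊢
    rw [e2]
    ring
  have hadd : ∀ a b : A, φ (a + b) = φ a + φ b := by
    intro a b
    by_cases ha : a = 0
    · simp [ha, h0]
    by_cases hb : b = 0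
    · simp [hb, h0]
    by_cases hab : a + b = 0
    · rw [hab, h0, eq_neg_of_add_eq_zero_right hab, ← neg_one_smul ℂ a, hsmul]
      simp
    rw [← sub_eq_zero]
    refine aux_generic (ι := Fin 3)
      (fun i => ((![a, b, a + b] i : A) : E →L[ℂ] E)) ?_ _ ?_
    · intro i h
      have h' : ![a, b, a + b] i = 0 := Subtype.ext h
      fin_cases i
      · exact ha h'
      · exact hb h'
      · exact hab h'
    intro y g hg
    obtain ⟨u, h, hk⟩ := key y g
    have e1 := hk a (hg 0)
    have e2 := hk b (hg 1)
    have e3 := hk (a + b) (hg 2)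
    simp only [_root_.sub_apply, map_sub, _root_.add_apply, map_add,
      AddMemClass.coe_add, e1, e2] at e3 ⊢
    rw [e3]
    ring
  have hlin : IsLinearMap ℂ φ := ⟨hadd, hsmul⟩
  refine ⟨hlin, ?_⟩
  have hidem : ∀ a p : A, p * p = p →
      φ (a * p) = φ a * (p : E →L[ℂ] E) + (a : E →L[ℂ] E) * φ p := by
    intro a p hp
    have e1 := hzero (a * p) (1 - p) (by rw [mul_sub, mul_one, mul_assoc, hp, sub_self])
    have e2 := hzero (a - a * p) p (by rw [sub_mul, mul_assoc, hp, sub_self])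
    rw [hlin.map_sub, h1] at e1
    rw [hlin.map_sub] at e2
    simp only [AddSubgroupClass.coe_sub, OneMemClass.coe_one, MulMemClass.coe_mul] at e1 e2
    have e3 := congrArg₂ (· - ·) e1 e2
    simp only [mul_sub, sub_mul, mul_one, mul_zero, add_zero, zero_sub, mul_neg, sub_zero] at e3
    rw [← sub_eq_zero]
    refine Eq.trans ?_ e3
    abel
  have hrank : ∀ (a : A) (y z : E) (f : E →L[ℂ] ℂ), f y = 1 → ∀ r : A,
      (r : E →L[ℂ] E) = f.smulRight z →
      φ (a * r) = φ a * (r : E →L[ℂ] E) + (a : E →L[ℂ] E) * φ r := by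
    intro a y z f hf r hr
    let p : A := ⟨f.smulRight y, hA _ (aux_rank f y)⟩
    let q : A := ⟨f.smulRight (y + (z - f z • y)), hA _ (aux_rank f _)⟩
    have hpz : ∀ x, (p : E →L[ℂ] E) x = f x • y := fun _ => rfl
    have hqz : ∀ x, (q : E →L[ℂ] E) x = f x • (y + (z - f z • y)) := fun _ => rfl
    have hp : p * p = p := by
      apply Subtype.ext
      ext x
      simp [hpz, hf]
    have hq : q * q = q := by
      apply Subtype.ext
      ext x
      simp [hqz, hf]
    have hrq : r = q + (f z - 1) • p := by
      apply Subtype.ext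
      ext x
      simp only [hr, AddMemClass.coe_add, SetLike.val_smul, _root_.add_apply,
        _root_.smul_apply, hpz, hqz, ContinuousLinearMap.smulRight_apply]
      module
    have e1 := hidem a p hp
    have e2 := hidem a q hq
    rw [hrq, mul_add, mul_smul_comm, hadd, hadd, hsmul, hsmul, e1, e2]
    simp only [AddMemClass.coe_add, SetLike.val_smul, mul_add, mul_smul_comm, smul_add]
    abel
  intro a b
  ext y
  by_cases hy : y = 0
  · simp [hy]
  obtain ⟨f, hf⟩ := aux_sep y hy
  let p : A := ⟨f.smulRight y, hA _ (aux_rank f y)⟩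
  have hpy : (p : E →L[ℂ] E) y = y := by
    change f y • y = y
    rw [hf, one_smul]
  have e1 := hrank (a * b) y y f hf p rfl
  have e2 := hrank b y y f hf p rfl
  have e3 := hrank a y ((b : E →L[ℂ] E) y) f hf (b * p) (by
    ext x
    change (b : E →L[ℂ] E) (f x • y) = f x • (b : E →L[ℂ] E) y
    rw [map_smul])
  rw [← mul_assoc, e1, e2] at e3
  have e4 := congrArg (fun T : E →L[ℂ] E => T y) e3
  simp only [MulMemClass.coe_mul, _root_.add_apply, aux_mul,
    hpy, map_add] at e4
  rw [← add_assoc] at e4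
  exact add_right_cancel e4
end

section
/- Let A be a standard operator algebra on a complex Banach space E of dimension at least three, and let φ : A → A be a (not necessarily linear, additive or continuous) map whose range contains all rank-one idempotent operators on E. Suppose for any a, b ∈ A there is an algebra automorphism θ_{a,b} of A with φ(a) + φ(b) = θ_{a,b}(a + b). Then φ maps the algebra F(E) of bounded finite-rank operators into itself, and the restriction of φ to F(E) is either an algebra automorphism or an algebra anti-automorphism of F(E). -/
set_option synthInstance.maxHeartbeats 1000000
set_option maxHeartbeats 1000000

open Cardinal

namespace Stmt3Aux

section abstract_part

variable {A : Type*} [Ring A] [Algebra ℂ A]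

theorem aut_inv {θ : A → A} (h : IsAlgAutomorphism θ) :
    ∃ η : A → A, IsAlgAutomorphism η ∧ (∀ x, θ (η x) = x) ∧ (∀ x, η (θ x) = x) := by
  obtain ⟨hb, hl, hm⟩ := h
  let e := Equiv.ofBijective θ hb
  have h1 : ∀ x, θ (e.symm x) = x := fun x => e.apply_symm_apply x
  have h2 : ∀ x, e.symm (θ x) = x := fun x => e.symm_apply_apply x
  refine ⟨e.symm, ⟨e.symm.bijective, ⟨?_, ?_⟩, ?_⟩, h1, h2⟩
  · intro x y
    apply hb.1
    rw [hl.map_add, h1, h1, h1]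
  · intro c y
    apply hb.1
    rw [hl.map_smul, h1, h1]
  · intro x y
    apply hb.1
    rw [hm, h1, h1, h1]

theorem prime_aux {F : Submodule ℂ A}
    (hidr : ∀ a ∈ F, ∀ b, b * a ∈ F)
    (hidl : ∀ a ∈ F, ∀ b, a * b ∈ F)
    (hprime : ∀ a b : A, (∀ p ∈ F, a * p * b = 0) → a = 0 ∨ b = 0)
    (u v : A) (h : ∀ r ∈ F, u * r * v + v * r * u = 0) : u = 0 ∨ v = 0 := by
  apply hprime
  intro r hr
  have key : ∀ s ∈ F, (u * r * v) * s * (u * r * v) = 0 := by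
    intro s hs
    have e0 := h r hr
    have e1 := h (r * v * s * u * r) (hidr _ hr _)
    have e2 := h (r * v * s) (hidr _ hs _)
    have e3 : (2 : ℂ) • ((u * r * v) * s * (u * r * v)) = 0 := by
      have f0 : v * r * u = - (u * r * v) := by
        rw [eq_neg_iff_add_eq_zero, add_comm]; exact e0
      have f1 : (u * r * v) * s * (u * r * v) = - ((v * r * v) * s * (u * r * u)) := by
        rw [eq_neg_iff_add_eq_zero]
        simpa [mul_assoc] using e1
      have f2 : (u * r * v) * s * (u * r * v) = (v * r * v) * s * (u * r * u) := by
        have g1 : (u * r * v) * s * (u * r * v) = - ((u * (r * v * s) * v) * (r * u)) := by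
          have : u * r * v = - (v * r * u) := by rw [f0, neg_neg]
          calc (u * r * v) * s * (u * r * v) = (u * r * v) * s * (- (v * r * u)) := by
                rw [← this]
            _ = _ := by simp [mul_assoc]
        have g2 : u * (r * v * s) * v = - (v * (r * v * s) * u) := by
          rw [eq_neg_iff_add_eq_zero]; exact e2
        rw [g1, g2]; simp [mul_assoc]
      rw [two_smul]
      nth_rewrite 1 [f1]
      rw [f2]; simp
    exact (smul_eq_zero.mp e3).resolve_left two_ne_zero
  rcases hprime _ _ key with h | h <;> exact h

/-- a surjective Jordan homomorphism onto a prime algebra -/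
theorem herstein {F : Submodule ℂ A}
    (hidr : ∀ a ∈ F, ∀ b, b * a ∈ F)
    (hidl : ∀ a ∈ F, ∀ b, a * b ∈ F)
    (hprime : ∀ a b : A, (∀ p ∈ F, a * p * b = 0) → a = 0 ∨ b = 0)
    (φ : A → A)
    (hsurj : ∀ b ∈ F, ∃ a ∈ F, φ a = b)
    (hadd : ∀ a ∈ F, ∀ b ∈ F, φ (a + b) = φ a + φ b)
    (hsmul : ∀ a ∈ F, ∀ c : ℂ, φ (c • a) = c • φ a)
    (hsq : ∀ a ∈ F, φ (a * a) = φ a * φ a) :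
    (∀ a ∈ F, ∀ b ∈ F, φ (a * b) = φ a * φ b) ∨ (∀ a ∈ F, ∀ b ∈ F, φ (a * b) = φ b * φ a) := by
  have hsub : ∀ a ∈ F, ∀ b ∈ F, φ (a - b) = φ a - φ b := by
    intro a ha b hb
    have h := hadd (a - b) (F.sub_mem ha hb) b hb
    rw [sub_add_cancel] at h
    rw [h]; simp
  have hJ : ∀ a ∈ F, ∀ b ∈ F, φ (a * b + b * a) = φ a * φ b + φ b * φ a := by
    intro a ha b hb
    have h := hsq (a + b) (F.add_mem ha hb)
    have e : (a + b) * (a + b) = (a * a + b * b) + (a * b + b * a) := by noncomm_ring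
    rw [e, hadd _ (F.add_mem (hidr _ ha _) (hidr _ hb _)) _
      (F.add_mem (hidr _ hb _) (hidr _ ha _)), hadd _ (hidr _ ha _) _ (hidr _ hb _),
      hsq a ha, hsq b hb, hadd a ha b hb] at h
    have e2 : (φ a + φ b) * (φ a + φ b) = (φ a * φ a + φ b * φ b) + (φ a * φ b + φ b * φ a) := by
      noncomm_ring
    rw [e2] at h
    exact add_left_cancel h
  have hT : ∀ a ∈ F, ∀ b ∈ F, φ (a * b * a) = φ a * φ b * φ a := by
    intro a ha b hb
    have hab : a * b + b * a ∈ F := F.add_mem (hidr _ hb _) (hidr _ ha _)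
    have h1 := hJ a ha _ hab
    have h2 := hJ (a * a) (hidr _ ha _) b hb
    have e : (2 : ℂ) • (a * b * a) =
        (a * (a * b + b * a) + (a * b + b * a) * a) - ((a * a) * b + b * (a * a)) := by
      rw [two_smul]; noncomm_ring
    have h3 := hsmul (a * b * a) (hidr _ ha _) 2
    rw [e, hsub _ (F.add_mem (hidr _ hab _) (hidr _ ha _)) _
      (F.add_mem (hidr _ hb _) (hidr _ (hidr _ ha _) _)), h1, h2, hJ a ha b hb, hsq a ha] at h3
    have e2 : (2 : ℂ) • (φ a * φ b * φ a) =
        (φ a * (φ a * φ b + φ b * φ a) + (φ a * φ b + φ b * φ a) * φ a)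
          - ((φ a * φ a) * φ b + φ b * (φ a * φ a)) := by
      rw [two_smul]; noncomm_ring
    rw [← e2] at h3
    exact (smul_right_injective A (two_ne_zero (α := ℂ)) h3).symm
  have hT3 : ∀ a ∈ F, ∀ b ∈ F, ∀ c ∈ F,
      φ (a * b * c + c * b * a) = φ a * φ b * φ c + φ c * φ b * φ a := by
    intro a ha b hb c hc
    have h := hT (a + c) (F.add_mem ha hc) b hb
    have e : (a + c) * b * (a + c) = (a * b * a + c * b * c) + (a * b * c + c * b * a) := by
      noncomm_ring
    rw [e, hadd _ (F.add_mem (hidr _ ha _) (hidr _ hc _)) _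
      (F.add_mem (hidr _ hc _) (hidr _ ha _)), hadd _ (hidr _ ha _) _ (hidr _ hc _),
      hT a ha b hb, hT c hc b hb, hadd a ha c hc] at h
    have e2 : (φ a + φ c) * φ b * (φ a + φ c) = (φ a * φ b * φ a + φ c * φ b * φ c)
        + (φ a * φ b * φ c + φ c * φ b * φ a) := by
      noncomm_ring
    rw [e2] at h
    exact add_left_cancel h
  have hor : ∀ a ∈ F, ∀ b ∈ F, φ (a * b) = φ a * φ b ∨ φ (a * b) = φ b * φ a := by
    intro a ha b hb
    have := prime_aux hidr hidl hprime (φ (a * b) - φ a * φ b) (φ (a * b) - φ b * φ a) ?_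
    · rcases this with h | h
      · left; exact sub_eq_zero.mp h
      · right; exact sub_eq_zero.mp h
    intro r' hr'
    obtain ⟨r, hr, rfl⟩ := hsurj r' hr'
    have hab : a * b ∈ F := hidr _ hb _
    have hba : b * a ∈ F := hidr _ ha _
    have h1 := hT3 (a * b) hab r hr (b * a) hba
    have h2 := hT a ha (b * r * b) (hidr _ hb _)
    have h3 := hT b hb (a * r * a) (hidr _ ha _)
    rw [hT b hb r hr] at h2
    rw [hT a ha r hr] at h3
    have e : a * b * r * (b * a) + b * a * r * (a * b) =
      a * (b * r * b) * a + b * (a * r * a) * b := by noncomm_ring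
    rw [e, hadd _ (hidr _ ha _) _ (hidr _ hb _), h2, h3] at h1
    have h4 : φ (b * a) = φ a * φ b + φ b * φ a - φ (a * b) := by
      rw [← hJ a ha b hb, hadd _ hab _ hba]; abel
    rw [h4] at h1
    have h5 := sub_eq_zero.mpr h1
    rw [← h5]
    noncomm_ring
  have hor2 : ∀ a ∈ F, (∀ b ∈ F, φ (a * b) = φ a * φ b) ∨ (∀ b ∈ F, φ (a * b) = φ b * φ a) := by
    intro a ha
    by_contra! hcon
    obtain ⟨⟨b, hb, hb1⟩, ⟨c, hc, hc1⟩⟩ := hcon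
    have hb2 := (hor a ha b hb).resolve_left hb1
    have hc2 := (hor a ha c hc).resolve_right hc1
    have h := hor a ha (b + c) (F.add_mem hb hc)
    rw [mul_add, hadd _ (hidr _ hb _) _ (hidr _ hc _), hadd b hb c hc, mul_add, add_mul] at h
    rcases h with h | h
    · rw [hc2] at h; exact hb1 (add_right_cancel h)
    · rw [hb2] at h; exact hc1 (add_left_cancel h)
  by_contra! hcon
  obtain ⟨⟨a, ha, b, hb, hab⟩, ⟨c, hc, d, hd, hcd⟩⟩ := hcon
  have ha2 : ∀ b ∈ F, φ (a * b) = φ b * φ a := (hor2 a ha).resolve_left (fun h => hab (h b hb))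
  have hc2 : ∀ b ∈ F, φ (c * b) = φ c * φ b := (hor2 c hc).resolve_right (fun h => hcd (h d hd))
  rcases hor2 (a + c) (F.add_mem ha hc) with h | h
  · have h := h b hb
    rw [add_mul, hadd _ (hidr _ hb _) _ (hidr _ hb _), hadd a ha c hc, add_mul, hc2 b hb] at h
    exact hab (add_right_cancel h)
  · have h := h d hd
    rw [add_mul, hadd _ (hidr _ hd _) _ (hidr _ hd _), hadd a ha c hc, mul_add, ha2 d hd] at h
    exact hcd (add_left_cancel h)

theorem abstract_main (P : Set A) (tr : A →ₗ[ℂ] ℂ)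
    (htrP : ∀ p ∈ P, tr p = 1)
    (hidr : ∀ a ∈ Submodule.span ℂ P, ∀ b, b * a ∈ Submodule.span ℂ P)
    (hidl : ∀ a ∈ Submodule.span ℂ P, ∀ b, a * b ∈ Submodule.span ℂ P)
    (hcomm : ∀ a ∈ Submodule.span ℂ P, ∀ b, tr (a * b) = tr (b * a))
    (hnd : ∀ a, (∀ p ∈ P, tr (a * p) = 0) → a = 0)
    (hprime : ∀ a b : A, (∀ p ∈ Submodule.span ℂ P, a * p * b = 0) → a = 0 ∨ b = 0)
    (hθ : ∀ θ : A → A, IsAlgAutomorphism θ → ∀ p ∈ P, θ p ∈ P)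
    (φ : A → A) (hrange : ∀ p ∈ P, ∃ a, φ a = p)
    (hφ : ∀ a b : A, ∃ θ : A → A, IsAlgAutomorphism θ ∧ φ a + φ b = θ (a + b))
    (F : Submodule ℂ A) (hF : F = Submodule.span ℂ P) :
    (∀ a ∈ F, φ a ∈ F) ∧ (∀ b ∈ F, ∃ a ∈ F, φ a = b) ∧
    (∀ a ∈ F, ∀ b ∈ F, φ a = φ b → a = b) ∧
    (∀ (c₁ c₂ : ℂ), ∀ a ∈ F, ∀ b ∈ F, φ (c₁ • a + c₂ • b) = c₁ • φ a + c₂ • φ b) ∧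
    ((∀ a ∈ F, ∀ b ∈ F, φ (a * b) = φ a * φ b) ∨
     (∀ a ∈ F, ∀ b ∈ F, φ (a * b) = φ b * φ a)) := by
  rw [← hF] at hidr hidl hcomm hprime
  have hPF : ∀ p ∈ P, p ∈ F := fun p hp => hF ▸ Submodule.subset_span hp
  have hθF : ∀ θ : A → A, IsAlgAutomorphism θ → ∀ a ∈ F, θ a ∈ F ∧ tr (θ a) = tr a := by
    intro θ hh a ha
    have hl := hh.2.1
    rw [hF] at ha
    induction ha using Submodule.span_induction with
    | mem x hx =>
      exact ⟨hPF _ (hθ θ hh x hx), by rw [htrP _ hx, htrP _ (hθ θ hh x hx)]⟩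
    | zero => simp [hl.map_zero]
    | add x y _ _ hx hy =>
      rw [hl.map_add, map_add, map_add, hx.2, hy.2]
      exact ⟨F.add_mem hx.1 hy.1, rfl⟩
    | smul c x _ hx =>
      rw [hl.map_smul, map_smul, map_smul, hx.2]
      exact ⟨F.smul_mem c hx.1, rfl⟩
  have hloc : ∀ a, ∃ θ : A → A, IsAlgAutomorphism θ ∧ φ a = θ a := by
    intro a
    obtain ⟨θ, h1, h2⟩ := hφ a a
    refine ⟨θ, h1, ?_⟩
    rw [h1.2.1.map_add, ← two_smul ℂ, ← two_smul ℂ] at h2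
    exact smul_right_injective A (two_ne_zero (α := ℂ)) h2
  have hneg : ∀ a, φ (-a) = - φ a := by
    intro a
    obtain ⟨θ, h1, h2⟩ := hφ a (-a)
    rw [add_neg_cancel, h1.2.1.map_zero] at h2
    rw [eq_neg_iff_add_eq_zero, add_comm, h2]
  have hinj : ∀ a b, φ a = φ b → a = b := by
    intro a b hab
    obtain ⟨θ, h1, h2⟩ := hφ a (-b)
    rw [hneg, hab, add_neg_cancel, ← h1.2.1.map_zero] at h2
    have := h1.1.1 h2
    rw [← sub_eq_add_neg] at this
    exact sub_eq_zero.mp this.symm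
  have hmem : ∀ a ∈ F, φ a ∈ F := by
    intro a ha
    obtain ⟨θ, h1, h2⟩ := hloc a
    rw [h2]; exact (hθF θ h1 a ha).1
  have hrP : ∀ p ∈ P, ∃ a ∈ F, φ a = p := by
    intro p hp
    obtain ⟨a, ha⟩ := hrange p hp
    obtain ⟨θ, h1, h2⟩ := hloc a
    obtain ⟨η, h3, h4, h5⟩ := aut_inv h1
    refine ⟨a, ?_, ha⟩
    rw [← h5 a, ← h2, ha]
    exact hPF _ (hθ η h3 p hp)
  have htr2 : ∀ a ∈ F, ∀ b ∈ F, tr ((φ a + φ b) * (φ a + φ b)) = tr ((a + b) * (a + b)) := by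
    intro a ha b hb
    obtain ⟨θ, h1, h2⟩ := hφ a b
    rw [h2, ← h1.2.2]
    exact (hθF θ h1 _ (hidr _ (F.add_mem ha hb) _)).2
  have htr3 : ∀ a ∈ F, ∀ b ∈ F, tr ((φ a + φ b) * (φ a + φ b) * (φ a + φ b))
      = tr ((a + b) * (a + b) * (a + b)) := by
    intro a ha b hb
    obtain ⟨θ, h1, h2⟩ := hφ a b
    rw [h2, ← h1.2.2, ← h1.2.2]
    exact (hθF θ h1 _ (hidr _ (F.add_mem ha hb) _)).2
  have htr2s : ∀ a ∈ F, tr (φ a * φ a) = tr (a * a) := by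
    intro a ha
    obtain ⟨θ, h1, h2⟩ := hloc a
    rw [h2, ← h1.2.2]
    exact (hθF θ h1 _ (hidr _ ha _)).2
  have htr3s : ∀ a ∈ F, tr (φ a * φ a * φ a) = tr (a * a * a) := by
    intro a ha
    obtain ⟨θ, h1, h2⟩ := hloc a
    rw [h2, ← h1.2.2, ← h1.2.2]
    exact (hθF θ h1 _ (hidr _ ha _)).2
  have hbil : ∀ a ∈ F, ∀ b ∈ F, tr (φ a * φ b) = tr (a * b) := by
    intro a ha b hb
    have h := htr2 a ha b hb
    simp only [add_mul, mul_add, map_add] at h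
    have h1 := hcomm a ha b
    have h2 := hcomm (φ a) (hmem a ha) (φ b)
    have h3 := htr2s a ha
    have h4 := htr2s b hb
    linear_combination (1/2) * h - (1/2) * h3 - (1/2) * h4 + (1/2) * h2 - (1/2) * h1
  have htri : ∀ a ∈ F, ∀ b ∈ F, tr (φ b * φ b * φ a) = tr (b * b * a) := by
    intro a ha b hb
    have h := htr3 b hb a ha
    have h' := htr3 b hb (-a) (F.neg_mem ha)
    rw [hneg] at h'
    simp only [add_mul, mul_add, map_add, mul_neg, neg_mul, map_neg, neg_neg] at h h'
    have h1 := hcomm a ha (b * b)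
    have h2 := hcomm (φ a) (hmem a ha) (φ b * φ b)
    have h3 := hcomm (b * a) (hidr _ ha _) b
    have h4 := hcomm (φ b * φ a) (hidr _ (hmem a ha) _) (φ b)
    have h5 := htr3s a ha
    simp only [← mul_assoc] at h1 h2 h3 h4 h h'
    linear_combination (1/6) * h - (1/6) * h' - (1/3) * h5 + (1/3) * h1 - (1/3) * h2
      + (1/3) * h3 - (1/3) * h4
  have hlin : ∀ (c₁ c₂ : ℂ), ∀ a ∈ F, ∀ b ∈ F,
      φ (c₁ • a + c₂ • b) = c₁ • φ a + c₂ • φ b := by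
    intro c₁ c₂ a ha b hb
    rw [← sub_eq_zero]
    apply hnd
    intro p hp
    obtain ⟨c, hc, rfl⟩ := hrP p hp
    rw [sub_mul, add_mul, smul_mul_assoc, smul_mul_assoc, map_sub, map_add, map_smul, map_smul,
      hbil _ (F.add_mem (F.smul_mem _ ha) (F.smul_mem _ hb)) c hc, hbil a ha c hc,
      hbil b hb c hc, add_mul, smul_mul_assoc, smul_mul_assoc, map_add, map_smul, map_smul,
      sub_self]
  have hadd : ∀ a ∈ F, ∀ b ∈ F, φ (a + b) = φ a + φ b := by
    intro a ha b hb
    simpa using hlin 1 1 a ha b hb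
  have hsmul : ∀ a ∈ F, ∀ c : ℂ, φ (c • a) = c • φ a := by
    intro a ha c
    simpa using hlin c 0 a ha a ha
  have hsurj : ∀ b ∈ F, ∃ a ∈ F, φ a = b := by
    intro b hb
    rw [hF] at hb
    induction hb using Submodule.span_induction with
    | mem x hx => exact hrP x hx
    | zero =>
      refine ⟨0, F.zero_mem, ?_⟩
      simpa using hsmul 0 F.zero_mem 0
    | add x y _ _ hx hy =>
      obtain ⟨a, ha, rfl⟩ := hx
      obtain ⟨b, hb, rfl⟩ := hy
      exact ⟨a + b, F.add_mem ha hb, hadd a ha b hb⟩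
    | smul c x _ hx =>
      obtain ⟨a, ha, rfl⟩ := hx
      exact ⟨c • a, F.smul_mem c ha, hsmul a ha c⟩
  refine ⟨hmem, hsurj, fun a _ b _ => hinj a b, hlin, ?_⟩
  apply herstein hidr hidl hprime φ hsurj hadd hsmul
  intro b hb
  rw [← sub_eq_zero]
  apply hnd
  intro p hp
  obtain ⟨c, hc, rfl⟩ := hrP p hp
  rw [sub_mul, map_sub, hbil _ (hidr _ hb _) c hc, htri c hc b hb, sub_self]

end abstract_part

section operators

variable {E : Type*} [NormedAddCommGroup E] [NormedSpace ℂ E]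

/-- the rank-one operator `v ↦ f v • x` -/
noncomputable abbrev R1 (f : E →L[ℂ] ℂ) (x : E) : E →L[ℂ] E := f.smulRight x

theorem exists_trace : ∃ t : (E →L[ℂ] E) →ₗ[ℂ] ℂ, ∀ (f : E →L[ℂ] ℂ) (x : E), t (R1 f x) = f x := by
  classical
  let b := Module.Basis.ofVectorSpace ℂ E
  let ι := Module.Basis.ofVectorSpaceIndex ℂ E
  let J : (ι →₀ ℂ) →ₗ[ℂ] (ι → ℂ) := Finsupp.lcoeFun
  obtain ⟨L, hL⟩ := J.exists_leftInverse_of_injective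
    (LinearMap.ker_eq_bot.mpr (by exact DFunLike.coe_injective))
  let D : (E →L[ℂ] E) →ₗ[ℂ] (ι → ℂ) :=
    { toFun := fun T i => b.repr (T (b i)) i
      map_add' := by intro S T; ext i; simp
      map_smul' := by intro c T; ext i; simp }
  refine ⟨(Finsupp.lsum ℕ fun _ => LinearMap.id) ∘ₗ L ∘ₗ D, ?_⟩
  intro f x
  let s' : ι →₀ ℂ := Finsupp.onFinset (b.repr x).support (fun i => b.repr x i * f (b i))
    (by intro i hi; rw [Finsupp.mem_support_iff]; exact left_ne_zero_of_mul hi)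
  have h1 : D (R1 f x) = J s' := by
    ext i
    simp [D, J, s', Finsupp.lcoeFun, mul_comm]
  have h2 : L (J s') = s' := by
    rw [← LinearMap.comp_apply, hL]; rfl
  rw [LinearMap.comp_apply, LinearMap.comp_apply, h1, h2]
  rw [Finsupp.lsum_apply]
  simp only [LinearMap.id_coe, s']
  rw [Finsupp.onFinset_sum _ (by simp)]
  have h3 : f x = f ((b.repr x).sum fun i c => c • b i) := by
    congr 1
    exact (b.linearCombination_repr x).symm
  rw [h3, Finsupp.sum, map_sum]
  simp only [map_smul, smul_eq_mul]
  rfl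

theorem mul_R1 (T : E →L[ℂ] E) (f : E →L[ℂ] ℂ) (x : E) : T * R1 f x = R1 f (T x) := by
  ext v; simp

theorem R1_mul (T : E →L[ℂ] E) (f : E →L[ℂ] ℂ) (x : E) : R1 f x * T = R1 (f.comp T) x := by
  ext v; simp

theorem R1_rank_le (f : E →L[ℂ] ℂ) (x : E) :
    LinearMap.rank ((R1 f x : E →L[ℂ] E) : E →ₗ[ℂ] E) < ℵ₀ := by
  refine lt_of_le_of_lt (b := Module.rank ℂ (Submodule.span ℂ {x})) ?_ ?_
  · apply Submodule.rank_mono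
    rintro _ ⟨v, rfl⟩
    exact Submodule.mem_span_singleton.mpr ⟨f v, by simp⟩
  · exact Module.rank_lt_aleph0 _ _

theorem R1_rank_one (f : E →L[ℂ] ℂ) (x : E) (h : f x = 1) :
    LinearMap.rank ((R1 f x : E →L[ℂ] E) : E →ₗ[ℂ] E) = 1 := by
  have hx : x ≠ 0 := by rintro rfl; simp at h
  have : LinearMap.range ((R1 f x : E →L[ℂ] E) : E →ₗ[ℂ] E) = Submodule.span ℂ {x} := by
    apply le_antisymm
    · rintro _ ⟨v, rfl⟩
      exact Submodule.mem_span_singleton.mpr ⟨f v, by simp⟩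
    · rw [Submodule.span_singleton_le_iff_mem]
      exact ⟨x, by simp [h]⟩
  rw [LinearMap.rank, this, ← Module.finrank_eq_rank, finrank_span_singleton hx]
  simp

theorem fin_rank_sum (T : E →L[ℂ] E) (hT : LinearMap.rank (T : E →ₗ[ℂ] E) < ℵ₀) :
    ∃ (n : ℕ) (f : Fin n → E →L[ℂ] ℂ) (x : Fin n → E), T = ∑ i, R1 (f i) (x i) := by
  let W := LinearMap.range (T : E →ₗ[ℂ] E)
  haveI : FiniteDimensional ℂ W := Module.rank_lt_aleph0_iff.mp hT
  let b := Module.finBasis ℂ W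
  let T' : E →L[ℂ] W := T.codRestrict W (fun v => ⟨v, rfl⟩)
  refine ⟨_, fun i => (LinearMap.toContinuousLinearMap (b.coord i)).comp T', fun i => b i, ?_⟩
  ext v
  have h := congrArg (Subtype.val) (b.sum_repr (T' v))
  have h2 : ((T' v : W) : E) = T v := rfl
  rw [h2] at h
  rw [← h, Submodule.coe_sum]
  simp

theorem exists_fun (x : E) (hx : x ≠ 0) : ∃ f : E →L[ℂ] ℂ, f x = 1 :=
  SeparatingDual.exists_eq_one hx

theorem final_facts (A : Subalgebra ℂ (E →L[ℂ] E))
    (hA : ∀ T : E →L[ℂ] E, LinearMap.rank (T : E →ₗ[ℂ] E) < ℵ₀ → T ∈ A)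
    (P : Set A) (hP : P = {p : A | ∃ (f : E →L[ℂ] ℂ) (x : E), f x = 1 ∧ (p : E →L[ℂ] E) = R1 f x}) :
    (∀ (f : E →L[ℂ] ℂ) (x : E), ∀ a : A, (a : E →L[ℂ] E) = R1 f x → a ∈ Submodule.span ℂ P) ∧
    (∀ a : A, a ∈ Submodule.span ℂ P ↔ LinearMap.rank ((a : E →L[ℂ] E) : E →ₗ[ℂ] E) < ℵ₀) := by
  have hp1 : ∀ (f : E →L[ℂ] ℂ) (x : E), f x = 1 → ∀ a : A, (a : E →L[ℂ] E) = R1 f x →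
      a ∈ Submodule.span ℂ P := by
    intro f x h a ha
    apply Submodule.subset_span
    rw [hP]
    exact ⟨f, x, h, ha⟩
  have hR : ∀ (f : E →L[ℂ] ℂ) (x : E), R1 f x ∈ A := fun f x => hA _ (R1_rank_le f x)
  have h1 : ∀ (f : E →L[ℂ] ℂ) (x : E), ∀ a : A, (a : E →L[ℂ] E) = R1 f x →
      a ∈ Submodule.span ℂ P := by
    intro f x a ha
    by_cases hx : x = 0
    · have : a = 0 := by
        apply Subtype.ext
        rw [ha, hx]; ext v; simp
      rw [this]; exact Submodule.zero_mem _
    by_cases hfx : f x = 0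
    · obtain ⟨g, hg⟩ := exists_fun x hx
      have : a = ⟨R1 (f + g) x, hR _ _⟩ - ⟨R1 g x, hR _ _⟩ := by
        apply Subtype.ext
        rw [ha]
        ext v
        simp [add_smul]
      rw [this]
      apply Submodule.sub_mem
      · exact hp1 (f + g) x (by simp [hfx, hg]) _ rfl
      · exact hp1 g x hg _ rfl
    · have : a = (f x) • (⟨R1 ((f x)⁻¹ • f) x, hR _ _⟩ : A) := by
        apply Subtype.ext
        rw [ha]
        ext v
        simp [smul_smul, hfx]
      rw [this]
      apply Submodule.smul_mem
      exact hp1 ((f x)⁻¹ • f) x (by simp [hfx]) _ rfl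
  refine ⟨h1, fun a => ⟨fun ha => ?_, fun ha => ?_⟩⟩
  · induction ha using Submodule.span_induction with
    | mem p hp =>
      rw [hP] at hp
      obtain ⟨f, x, -, h⟩ := hp
      rw [h]; exact R1_rank_le f x
    | zero => 
      simp [LinearMap.rank_zero, Cardinal.aleph0_pos]
    | add x y _ _ hx hy =>
      refine lt_of_le_of_lt (LinearMap.rank_add_le _ _) (Cardinal.add_lt_aleph0 hx hy)
    | smul c x _ hx =>
      refine lt_of_le_of_lt ?_ hx
      apply Submodule.rank_mono
      rintro _ ⟨v, rfl⟩
      exact ⟨c • v, by simp⟩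
  · obtain ⟨n, f, x, h⟩ := fin_rank_sum _ ha
    have : a = ∑ i, (⟨R1 (f i) (x i), hR _ _⟩ : A) := by
      apply Subtype.ext
      rw [h]
      simp
    rw [this]
    exact Submodule.sum_mem _ fun i _ => h1 (f i) (x i) _ rfl

theorem aut_P (A : Subalgebra ℂ (E →L[ℂ] E))
    (hA : ∀ T : E →L[ℂ] E, LinearMap.rank (T : E →ₗ[ℂ] E) < ℵ₀ → T ∈ A)
    (θ : A → A) (hθ : IsAlgAutomorphism θ) (p : A)
    (hp : ∃ (f : E →L[ℂ] ℂ) (x : E), f x = 1 ∧ (p : E →L[ℂ] E) = R1 f x) :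
    ∃ (f : E →L[ℂ] ℂ) (x : E), f x = 1 ∧ ((θ p : A) : E →L[ℂ] E) = R1 f x := by
  obtain ⟨f, x, hfx, hpe⟩ := hp
  have hR : ∀ (f : E →L[ℂ] ℂ) (x : E), R1 f x ∈ A := fun f x => hA _ (R1_rank_le f x)
  have hx : x ≠ 0 := by rintro rfl; simp at hfx
  have hpp : p * p = p := by
    apply Subtype.ext
    ext v
    simp [hpe, hfx]
  have hp0 : p ≠ 0 := by
    intro h
    have h2 : (p : E →L[ℂ] E) x = x := by simp [hpe, hfx]
    rw [h] at h2
    exact hx (by simpa using h2.symm)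
  have hpT : ∀ T : A, ∃ c : ℂ, p * T * p = c • p := by
    intro T
    refine ⟨f ((T : E →L[ℂ] E) x), ?_⟩
    apply Subtype.ext
    ext v
    simp [hpe, smul_smul, mul_comm]
  obtain ⟨η, hη, h1, h2⟩ := aut_inv hθ
  set q := θ p with hq
  have hqq : q * q = q := by rw [hq, ← hθ.2.2, hpp]
  have hq0 : q ≠ 0 := by
    intro h
    apply hp0
    apply hθ.1.1
    rw [← hq, h, hθ.2.1.map_zero]
  have hqT : ∀ T : A, ∃ c : ℂ, q * T * q = c • q := by
    intro T
    obtain ⟨c, hc⟩ := hpT (η T)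
    refine ⟨c, ?_⟩
    rw [hq, ← h1 T, ← hθ.2.2, ← hθ.2.2, hc, hθ.2.1.map_smul]
    
  have hq0' : ∃ w, (q : E →L[ℂ] E) w ≠ 0 := by
    by_contra! hcon
    apply hq0
    apply Subtype.ext
    ext v
    simpa using hcon v
  obtain ⟨w, hw⟩ := hq0'
  set y := (q : E →L[ℂ] E) w with hy
  have hqy : (q : E →L[ℂ] E) y = y := by
    have := congrArg (fun a : A => (a : E →L[ℂ] E) w) hqq
    simpa using this
  obtain ⟨g, hg⟩ := exists_fun y hw
  refine ⟨g.comp (q : E →L[ℂ] E), y, by simp [hqy, hg], ?_⟩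
  ext v
  obtain ⟨c, hc⟩ := hqT ⟨R1 g v, hR g v⟩
  have h3 := congrArg (fun a : A => (a : E →L[ℂ] E) y) hc
  have h4 : (q : E →L[ℂ] E) v = c • y := by simpa [hqy, hg] using h3
  simp [h4, hg]

end operators

end Stmt3Aux

theorem stmt3 {E : Type*} [NormedAddCommGroup E] [NormedSpace ℂ E] [CompleteSpace E]
    -- `E` has dimension at least three
    (hE : 3 ≤ Module.rank ℂ E)
    (A : Subalgebra ℂ (E →L[ℂ] E))
    -- `A` is a standard operator algebra: it contains every bounded finite-rank operator
    (hA : ∀ T : E →L[ℂ] E, LinearMap.rank (T : E →ₗ[ℂ] E) < ℵ₀ → T ∈ A)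
    (φ : A → A)
    -- the range of `φ` contains all rank-one idempotent operators
    (hrange : ∀ p : E →L[ℂ] E, p * p = p → LinearMap.rank (p : E →ₗ[ℂ] E) = 1 →
      ∃ a : A, (φ a : E →L[ℂ] E) = p)
    -- operational 2-local automorphism condition
    (hφ : ∀ a b : A, ∃ θ : A → A, IsAlgAutomorphism θ ∧ φ a + φ b = θ (a + b)) :
    -- `φ` maps finite-rank operators to finite-rank operators, and its restriction to
    -- the finite-rank operators is an algebra automorphism or anti-automorphism of `F(E)`
    (∀ a : A, LinearMap.rank ((a : E →L[ℂ] E) : E →ₗ[ℂ] E) < ℵ₀ →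
        LinearMap.rank ((φ a : E →L[ℂ] E) : E →ₗ[ℂ] E) < ℵ₀) ∧
    (∀ b : A, LinearMap.rank ((b : E →L[ℂ] E) : E →ₗ[ℂ] E) < ℵ₀ →
        ∃ a : A, LinearMap.rank ((a : E →L[ℂ] E) : E →ₗ[ℂ] E) < ℵ₀ ∧ φ a = b) ∧
    (∀ a b : A, LinearMap.rank ((a : E →L[ℂ] E) : E →ₗ[ℂ] E) < ℵ₀ →
        LinearMap.rank ((b : E →L[ℂ] E) : E →ₗ[ℂ] E) < ℵ₀ → φ a = φ b → a = b) ∧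
    (∀ (c₁ c₂ : ℂ) (a b : A), LinearMap.rank ((a : E →L[ℂ] E) : E →ₗ[ℂ] E) < ℵ₀ →
        LinearMap.rank ((b : E →L[ℂ] E) : E →ₗ[ℂ] E) < ℵ₀ →
        φ (c₁ • a + c₂ • b) = c₁ • φ a + c₂ • φ b) ∧
    ((∀ a b : A, LinearMap.rank ((a : E →L[ℂ] E) : E →ₗ[ℂ] E) < ℵ₀ →
        LinearMap.rank ((b : E →L[ℂ] E) : E →ₗ[ℂ] E) < ℵ₀ → φ (a * b) = φ a * φ b) ∨
     (∀ a b : A, LinearMap.rank ((a : E →L[ℂ] E) : E →ₗ[ℂ] E) < ℵ₀ →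
        LinearMap.rank ((b : E →L[ℂ] E) : E →ₗ[ℂ] E) < ℵ₀ → φ (a * b) = φ b * φ a)) := by
  classical
  let P : Set A := {p : A | ∃ (f : E →L[ℂ] ℂ) (x : E), f x = 1 ∧ (p : E →L[ℂ] E) = Stmt3Aux.R1 f x}
  obtain ⟨hspan, hmem⟩ := Stmt3Aux.final_facts A hA P rfl
  obtain ⟨t, ht⟩ := Stmt3Aux.exists_trace (E := E)
  have hR : ∀ (f : E →L[ℂ] ℂ) (x : E), Stmt3Aux.R1 f x ∈ A :=
    fun f x => hA _ (Stmt3Aux.R1_rank_le f x)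
  have hmain := Stmt3Aux.abstract_main P (t ∘ₗ A.val.toLinearMap) ?_ ?_ ?_ ?_ ?_ ?_ ?_ φ ?_ hφ _ rfl
  · obtain ⟨h1, h2, h3, h4, h5⟩ := hmain
    simp only [hmem] at h1 h2 h3 h4 h5
    exact ⟨h1, h2, fun a b ha hb => h3 a ha b hb, fun c d a b ha hb => h4 c d a ha b hb,
      h5.imp (fun h a b ha hb => h a ha b hb) (fun h a b ha hb => h a ha b hb)⟩
  · rintro p ⟨f, x, hfx, hp⟩
    simp [hp, ht, hfx]
  · intro a ha b
    rw [hmem] at ha ⊢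
    exact lt_of_le_of_lt (LinearMap.rank_comp_le_right _ _) ha
  · intro a ha b
    rw [hmem] at ha ⊢
    exact lt_of_le_of_lt (LinearMap.rank_comp_le_left _ _) ha
  · intro a ha b
    induction ha using Submodule.span_induction with
    | mem p hp =>
      obtain ⟨f, x, hfx, hp⟩ := hp
      have e1 : t ((p * b : A) : E →L[ℂ] E) = f ((b : E →L[ℂ] E) x) := by
        rw [MulMemClass.coe_mul, hp, Stmt3Aux.R1_mul, ht]; rfl
      have e2 : t ((b * p : A) : E →L[ℂ] E) = f ((b : E →L[ℂ] E) x) := by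
        rw [MulMemClass.coe_mul, hp, Stmt3Aux.mul_R1, ht]
      exact e1.trans e2.symm
    | zero => simp
    | add x y _ _ hx hy => rw [add_mul, mul_add, map_add, map_add, hx, hy]
    | smul c x _ hx => rw [smul_mul_assoc, mul_smul_comm, map_smul, map_smul, hx]
  · intro a ha
    have hall : ∀ s ∈ Submodule.span ℂ P, (t ∘ₗ A.val.toLinearMap) (a * s) = 0 := by
      intro s hs
      induction hs using Submodule.span_induction with
      | mem p hp => exact ha p hp
      | zero => simp
      | add x y _ _ hx hy => rw [mul_add, map_add, hx, hy, add_zero]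
      | smul c x _ hx => rw [mul_smul_comm, map_smul, hx, smul_zero]
    apply Subtype.ext
    ext v
    by_contra hv
    obtain ⟨g, hg⟩ := Stmt3Aux.exists_fun ((a : E →L[ℂ] E) v) hv
    have e := hall ⟨Stmt3Aux.R1 g v, hR g v⟩ (hspan g v _ rfl)
    have e1 : t ((a * (⟨Stmt3Aux.R1 g v, hR g v⟩ : A) : A) : E →L[ℂ] E)
        = g ((a : E →L[ℂ] E) v) := by
      rw [MulMemClass.coe_mul, Stmt3Aux.mul_R1, ht]
    have e2 := e1.symm.trans e
    rw [hg] at e2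
    exact one_ne_zero e2
  · intro a b h
    by_contra! hcon
    obtain ⟨ha, hb⟩ := hcon
    have hne : ∀ c : A, c ≠ 0 → ∃ w, (c : E →L[ℂ] E) w ≠ 0 := by
      intro c hc
      by_contra! hcon
      apply hc
      apply Subtype.ext
      ext v
      simpa using hcon v
    obtain ⟨v, hv⟩ := hne a ha
    obtain ⟨w, hw⟩ := hne b hb
    obtain ⟨g, hg⟩ := Stmt3Aux.exists_fun _ hw
    have e := h ⟨Stmt3Aux.R1 g v, hR g v⟩ (hspan g v _ rfl)
    have e1 := congrArg (fun a : A => (a : E →L[ℂ] E) w) e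
    apply hv
    simpa [hg] using e1
  · intro θ hθ p hp
    exact Stmt3Aux.aut_P A hA θ hθ p hp
  · rintro p ⟨f, x, hfx, hp⟩
    obtain ⟨a, ha⟩ := hrange (p : E →L[ℂ] E) (by
      ext v
      simp [hp, hfx]) (by rw [hp]; exact Stmt3Aux.R1_rank_one f x hfx)
    exact ⟨a, Subtype.ext ha⟩
end

section
/- Let A be a standard operator algebra on a complex Banach space E. Fix integers m, k with k ≥ 2 and a sequence (i_1, …, i_m) with {i_1, …, i_m} = {1, …, k} such that some index i_p is different from i_q for all q ≠ p; define the generalized product T_1 * ⋯ * T_k = T_{i_1}T_{i_2}⋯T_{i_m}. Let φ : A → A be a (not necessarily linear, additive or continuous) map whose range contains all bounded operators on E of rank at most two. Suppose for any a_1, …, a_k ∈ A, in which at least one a_j has rank at most one, there is an algebra automorphism θ of A with φ(a_1) * ⋯ * φ(a_k) = θ(a_1 * ⋯ * a_k). Then there is a complex scalar ξ with ξ^m = 1 such that either there is an invertible operator S ∈ B(E) with φ(a) = ξ S a S⁻¹ for all a ∈ A, or there is an invertible bounded linear operator S from the continuous dual E′ onto E with φ(a) = ξ S a′ S⁻¹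 for all a ∈ A, where a′ : E′ → E′ denotes the dual (adjoint) map of a. -/
set_option synthInstance.maxHeartbeats 1000000
set_option maxHeartbeats 1000000

open Cardinal ContinuousLinearMap

/-- The dual (adjoint) map `a' : E' → E'`, `f ↦ f ∘ a`, of a bounded operator `a` on `E`. -/
noncomputable def dualOp {E : Type*} [NormedAddCommGroup E] [NormedSpace ℂ E]
    (a : E →L[ℂ] E) : (E →L[ℂ] ℂ) →L[ℂ] (E →L[ℂ] ℂ) :=
  (ContinuousLinearMap.compL ℂ E E ℂ).flip a

section Aux
variable {E : Type*} [NormedAddCommGroup E] [NormedSpace ℂ E]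

/-- the rank-one operator `x ↦ g x • v` -/
noncomputable def rkOne (v : E) (g : E →L[ℂ] ℂ) : E →L[ℂ] E := g.smulRight v

@[simp] lemma rkOne_apply (v : E) (g : E →L[ℂ] ℂ) (x : E) : rkOne v g x = g x • v := rfl

lemma opMul_apply (S T : E →L[ℂ] E) (x : E) : (S * T) x = S (T x) := rfl

/-- rank at most one -/
def RkLe (T : E →L[ℂ] E) : Prop := ∃ v g, T = rkOne v g

lemma exists_fun_one {x : E} (hx : x ≠ 0) : ∃ f : E →L[ℂ] ℂ, f x = 1 :=
  SeparatingDual.exists_eq_one hx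

lemma eq_of_fun {x y : E} (h : ∀ f : E →L[ℂ] ℂ, f x = f y) : x = y := by
  by_contra hne
  obtain ⟨f, hf⟩ := exists_fun_one (sub_ne_zero.2 hne)
  rw [map_sub, h f, sub_self] at hf
  exact zero_ne_one hf

lemma RkLe.minor {T : E →L[ℂ] E} (hT : RkLe T) (e e' : E) (h : E →L[ℂ] ℂ) :
    h (T e) • T e' = h (T e') • T e := by
  obtain ⟨v, g, rfl⟩ := hT
  simp only [rkOne_apply, map_smul, smul_smul, smul_eq_mul]
  congr 1; ring

lemma rkLe_of_minor {T : E →L[ℂ] E}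
    (H : ∀ (e e' : E) (h : E →L[ℂ] ℂ), h (T e) • T e' = h (T e') • T e) : RkLe T := by
  by_cases h0 : T = 0
  · exact ⟨0, 0, by ext; simp [h0]⟩
  · obtain ⟨e, he⟩ : ∃ e, T e ≠ 0 := by
      by_contra! hc; exact h0 (by ext x; simp [hc x])
    obtain ⟨h, hh⟩ := exists_fun_one he
    refine ⟨T e, h ∘L T, ?_⟩
    ext x
    have := H e x h
    rw [hh, one_smul] at this
    simpa using this

lemma tr_unique {v v' : E} {g g' : E →L[ℂ] ℂ} (h : rkOne v g = rkOne v' g') : g v = g' v' := by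
  have h1 : g v • v = g' v • v' := by simpa using congrArg (fun T => T v) h
  have h2 : g v' • v = g' v' • v' := by simpa using congrArg (fun T => T v') h
  have a1 : g v * g v = g' v * g v' := by simpa using congrArg g h1
  have a2 : g v * g' v = g' v * g' v' := by simpa using congrArg g' h1
  have a3 : g v' * g' v = g' v' * g' v' := by simpa using congrArg g' h2
  by_cases h0 : g' v = 0
  · simp [h0] at a1 a3; rw [a1, ← a3]
  · have : g' v * (g v - g' v') = 0 := by linear_combination a2
    rcases mul_eq_zero.1 this with h | h
    · exact absurd h h0
    · exact sub_eq_zero.1 h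

lemma dual_pair {x y : E} (hxy : ∀ a b : ℂ, a • x + b • y = 0 → a = 0 ∧ b = 0) :
    ∃ f g : E →L[ℂ] ℂ, f x = 1 ∧ f y = 0 ∧ g x = 0 ∧ g y = 1 := by
  have hx : x ≠ 0 := by
    rintro rfl
    exact one_ne_zero (hxy 1 0 (by simp)).1
  obtain ⟨f, hf⟩ := exists_fun_one hx
  have hy : y - f y • x ≠ 0 := by
    intro h
    refine one_ne_zero (hxy (-(f y)) 1 ?_).2
    rw [← h]; module
  obtain ⟨g, hg⟩ := exists_fun_one hy
  simp only [map_sub, map_smul, smul_eq_mul] at hg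
  refine ⟨f - f y • (g - g x • f), g - g x • f, ?_, ?_, ?_, ?_⟩ <;>
    simp [hf]
  · linear_combination (-(f y)) * hg
  · linear_combination hg

lemma tr_add {v v' v'' : E} {g g' g'' : E →L[ℂ] ℂ}
    (h : rkOne v g + rkOne v' g' = rkOne v'' g'') : g'' v'' = g v + g' v' := by
  by_cases hli : ∀ a b : ℂ, a • v + b • v' = 0 → a = 0 ∧ b = 0
  · obtain ⟨p, q, p1, p2, q1, q2⟩ := dual_pair hli
    have H : ∀ x, g x • v + g' x • v' = g'' x • v'' := fun x => by
      simpa using congrArg (fun T => T x) h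
    have hp : ∀ x, g x = g'' x * p v'' := fun x => by simpa [p1, p2] using congrArg p (H x)
    have hq : ∀ x, g' x = g'' x * q v'' := fun x => by simpa [q1, q2] using congrArg q (H x)
    have hg := congrArg g'' (H v'')
    simp at hg
    rw [hp, hq] at hg
    rw [hp, hq]
    by_cases h0 : g'' v'' = 0
    · by_cases hz : ∃ x, g'' x ≠ 0
      · obtain ⟨x, hx⟩ := hz
        have hg' := congrArg g'' (H x)
        simp at hg'
        rw [hp, hq, h0] at hg'
        have : g'' x * (g'' v * p v'' + g'' v' * q v'') = 0 := by linear_combination hg'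
        rcases mul_eq_zero.1 this with h | h
        · exact absurd h hx
        · rw [h, h0]
      · push Not at hz
        simp [hz]
    · apply mul_left_cancel₀ h0
      linear_combination -hg
  · push Not at hli
    obtain ⟨a, b, hab, h0⟩ := hli
    by_cases hb : b = 0
    · have ha : a ≠ 0 := fun ha => h0 ha hb
      have hv : v = 0 := by simpa [hb, ha] using hab
      subst hv
      have : rkOne v' g' = rkOne v'' g'' := by rw [← h]; ext; simp
      simp [tr_unique this]
    · have hv : v' = (-(a / b)) • v := by
        have : b • v' = -(a • v) := by rw [eq_neg_iff_add_eq_zero, add_comm]; exact hab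
        calc v' = b⁻¹ • (b • v') := by rw [smul_smul, inv_mul_cancel₀ hb, one_smul]
          _ = _ := by rw [this]; simp only [smul_neg, smul_smul, neg_smul]; congr 2; ring
      generalize (-(a / b)) = c at hv
      subst hv
      have : rkOne v (g + c • g') = rkOne v'' g'' := by
        rw [← h]; ext x; simp [add_smul, smul_smul, mul_comm]
      rw [← tr_unique this]; simp

lemma exists_good (a b c d : ℂ) : ∃ z : ℂ, 1 + a * z + b * z ^ 2 ≠ 0 ∧ z ^ 2 + c * z + d ≠ 0 := by
  by_contra! H
  let p : Polynomial ℂ := 1 + Polynomial.C a * Polynomial.X + Polynomial.C b * Polynomial.X ^ 2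
  let q : Polynomial ℂ := Polynomial.X ^ 2 + Polynomial.C c * Polynomial.X + Polynomial.C d
  have hpq : p * q = 0 := by
    apply Polynomial.funext
    intro z
    simp only [p, q, Polynomial.eval_mul, Polynomial.eval_add, Polynomial.eval_one,
      Polynomial.eval_C, Polynomial.eval_X, Polynomial.eval_pow, Polynomial.eval_zero]
    by_cases hz : 1 + a * z + b * z ^ 2 = 0
    · rw [hz, zero_mul]
    · rw [H z hz, mul_zero]
  rcases mul_eq_zero.1 hpq with h | h
  · have := congrArg (fun r => Polynomial.coeff r 0) h
    simp [p] at this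
  · have := congrArg (fun r => Polynomial.coeff r 2) h
    simp [q] at this

/-- common complement test -/
lemma rank_two_test {T : E →L[ℂ] E} (hT : ¬ RkLe T) :
    ∃ (x y : E) (h k : E →L[ℂ] ℂ), ∀ s t : ℕ,
      ¬ RkLe ((rkOne x h + rkOne y k) ^ s * T * (rkOne x h + rkOne y k) ^ t) := by
  obtain ⟨x, y, hxy⟩ : ∃ x y : E, ∀ a b : ℂ, a • T x + b • T y = 0 → a = 0 ∧ b = 0 := by
    by_contra! hc
    apply hT
    apply rkLe_of_minor
    intro e e' h
    obtain ⟨a, b, hab, h0⟩ := hc e e'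
    by_cases hb : b = 0
    · have ha : a ≠ 0 := fun ha => h0 ha hb
      have hv : T e = 0 := by simpa [hb, ha] using hab
      simp [hv]
    · have hv : T e' = (-(a / b)) • T e := by
        have : b • T e' = -(a • T e) := by rw [eq_neg_iff_add_eq_zero, add_comm]; exact hab
        calc T e' = b⁻¹ • (b • T e') := by rw [smul_smul, inv_mul_cancel₀ hb, one_smul]
          _ = _ := by rw [this]; simp only [smul_neg, smul_smul, neg_smul]; congr 2; ring
      rw [hv]; simp only [map_smul, smul_smul, smul_eq_mul]; congr 1; ring
  have hxy' : ∀ a b : ℂ, a • x + b • y = 0 → a = 0 ∧ b = 0 := fun a b hab =>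
    hxy a b (by simpa using congrArg T hab)
  obtain ⟨f1, f2, f11, f12, f21, f22⟩ := dual_pair hxy'
  obtain ⟨g1, g2, g11, g12, g21, g22⟩ := dual_pair hxy
  obtain ⟨z, hz1, hz2⟩ := exists_good (g1 x + g2 y) (g1 x * g2 y - g1 y * g2 x)
    (f1 (T x) + f2 (T y)) (f1 (T x) * f2 (T y) - f1 (T y) * f2 (T x))
  set d := 1 + (g1 x + g2 y) * z + (g1 x * g2 y - g1 y * g2 x) * z ^ 2 with hd
  set H1 := f1 + z • g1 with hH1
  set H2 := f2 + z • g2 with hH2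
  have e11 : H1 x = 1 + z * g1 x := by simp [hH1, f11]
  have e12 : H1 y = z * g1 y := by simp [hH1, f12]
  have e21 : H2 x = z * g2 x := by simp [hH2, f21]
  have e22 : H2 y = 1 + z * g2 y := by simp [hH2, f22]
  have t11 : H1 (T x) = f1 (T x) + z := by simp [hH1, g11]
  have t12 : H1 (T y) = f1 (T y) := by simp [hH1, g12]
  have t21 : H2 (T x) = f2 (T x) := by simp [hH2, g21]
  have t22 : H2 (T y) = f2 (T y) + z := by simp [hH2, g22]
  set h := d⁻¹ • (H2 y • H1 - H1 y • H2) with hh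
  set k := d⁻¹ • (H1 x • H2 - H2 x • H1) with hk
  have hd' : d = H1 x * H2 y - H1 y * H2 x := by rw [e11, e12, e21, e22, hd]; ring
  have hx : h x = 1 := by
    simp [hh]; rw [inv_mul_eq_div, div_eq_one_iff_eq hz1, hd']; ring
  have hy : h y = 0 := by simp [hh]; right; ring
  have kx : k x = 0 := by simp [hk]; right; ring
  have ky : k y = 1 := by
    simp [hk]; rw [inv_mul_eq_div, div_eq_one_iff_eq hz1, hd']; ring
  have hdet : h (T x) * k (T y) - h (T y) * k (T x) ≠ 0 := by
    have : h (T x) * k (T y) - h (T y) * k (T x)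
        = d⁻¹ * (H1 (T x) * H2 (T y) - H1 (T y) * H2 (T x)) := by
      have hdd : d⁻¹ * d = 1 := inv_mul_cancel₀ hz1
      simp only [hh, hk, smul_apply, sub_apply,
        smul_eq_mul]
      generalize d⁻¹ = c at hdd
      linear_combination (-(c ^ 2 * (H1 (T x) * H2 (T y) - H1 (T y) * H2 (T x)))) * hd'
        + (c * (H1 (T x) * H2 (T y) - H1 (T y) * H2 (T x))) * hdd
    rw [this]
    refine mul_ne_zero (inv_ne_zero hz1) ?_
    rw [t11, t12, t21, t22]
    intro h0; apply hz2; rw [← h0]; ring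
  refine ⟨x, y, h, k, fun s t hR => ?_⟩
  set P := rkOne x h + rkOne y k with hP
  have Px : P x = x := by simp [hP, hx, kx]
  have Py : P y = y := by simp [hP, hy, ky]
  have powx : ∀ t : ℕ, (P ^ t) x = x := by
    intro t; induction t with
    | zero => simp
    | succ t ih => rw [pow_succ]; simp [Px, ih]
  have powy : ∀ t : ℕ, (P ^ t) y = y := by
    intro t; induction t with
    | zero => simp
    | succ t ih => rw [pow_succ]; simp [Py, ih]
  have Pinj : ∀ a b : ℂ, P (a • T x + b • T y) = 0 → a = 0 ∧ b = 0 := by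
    intro a b hab
    have : (a * h (T x) + b * h (T y)) • x + (a * k (T x) + b * k (T y)) • y = 0 := by
      rw [← hab]; simp [hP]
    obtain ⟨q1, q2⟩ := hxy' _ _ this
    constructor
    · have : a * (h (T x) * k (T y) - h (T y) * k (T x)) = 0 := by
        linear_combination k (T y) * q1 - h (T y) * q2
      exact (mul_eq_zero.1 this).resolve_right hdet
    · have : b * (h (T x) * k (T y) - h (T y) * k (T x)) = 0 := by
        linear_combination h (T x) * q2 - k (T x) * q1
      exact (mul_eq_zero.1 this).resolve_right hdet
  have PP : ∀ w, P (P w) = P w := by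
    intro w
    have : P w = h w • x + k w • y := by simp [hP]
    rw [this, map_add, map_smul, map_smul, Px, Py]
  have Pinj' : ∀ (s : ℕ) (w : E), (P ^ s) w = 0 → P w = 0 := by
    intro s; induction s with
    | zero => intro w hw; simp at hw; simp [hw]
    | succ s ih =>
      intro w hw
      rw [pow_succ] at hw
      have := ih (P w) hw
      rwa [PP] at this
  have key : ∀ a b : ℂ, a • (P ^ s) (T x) + b • (P ^ s) (T y) = 0 → a = 0 ∧ b = 0 := by
    intro a b hab
    apply Pinj
    apply Pinj' s
    rw [map_add, map_smul, map_smul]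
    exact hab
  obtain ⟨p, q, p1, p2, q1, q2⟩ := dual_pair key
  have := hR.minor x y p
  have hh := congrArg q this
  simp only [opMul_apply, powx, powy, p1, p2, q1, q2, map_smul, smul_eq_mul,
    mul_one, mul_zero, one_ne_zero] at hh

lemma theta_rk {A : Subalgebra ℂ (E →L[ℂ] E)} (hA1 : ∀ v g, rkOne v g ∈ A)
    {θ : A → A} (hθ : IsAlgAutomorphism θ) {T : A} {v : E} {g : E →L[ℂ] ℂ}
    (hT : (T : E →L[ℂ] E) = rkOne v g) :
    ∃ v' g', (θ T : E →L[ℂ] E) = rkOne v' g' ∧ g' v' = g v := by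
  obtain ⟨⟨hi, hs⟩, hl, hm⟩ := hθ
  have hTT : T * T = (g v) • T := by
    apply Subtype.ext
    ext x
    simp [hT, smul_smul, mul_comm]
  have hTbT : ∀ b : A, ∃ c : ℂ, T * b * T = c • T := by
    intro b
    refine ⟨g ((b : E →L[ℂ] E) v), Subtype.ext ?_⟩
    ext x
    simp [hT, smul_smul, mul_comm]
  by_cases T0 : T = 0
  · refine ⟨0, 0, ?_, ?_⟩
    · rw [T0, hl.map_zero]; ext; simp
    · have : rkOne v g = rkOne (0 : E) 0 := by rw [← hT, T0]; ext; simp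
      rw [tr_unique this]
  · have hne : θ T ≠ 0 := fun h => T0 (hi (by rw [h, hl.map_zero]))
    obtain ⟨e, he⟩ : ∃ e, (θ T : E →L[ℂ] E) e ≠ 0 := by
      by_contra! hc
      exact hne (Subtype.ext (by ext x; simp [hc x]))
    obtain ⟨h, hh⟩ := exists_fun_one he
    obtain ⟨b, hb⟩ := hs ⟨rkOne e h, hA1 e h⟩
    obtain ⟨c, hc⟩ := hTbT b
    have h1 := congrArg θ hc
    rw [hm, hm, hb, hl.map_smul] at h1
    have h2 : ∀ x, h ((θ T : E →L[ℂ] E) x) • (θ T : E →L[ℂ] E) e = c • (θ T : E →L[ℂ] E) x := by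
      intro x
      have := congrArg (fun S : A => (S : E →L[ℂ] E) x) h1
      simpa using this
    have hc1 : c = 1 := by
      have := congrArg h (h2 e)
      simpa [hh] using this.symm
    have h3 := congrArg θ hTT
    rw [hm, hl.map_smul] at h3
    have h4 : (θ T : E →L[ℂ] E) ((θ T : E →L[ℂ] E) e) = g v • (θ T : E →L[ℂ] E) e := by
      have := congrArg (fun S : A => (S : E →L[ℂ] E) e) h3
      simpa using this
    refine ⟨(θ T : E →L[ℂ] E) e, h ∘L (θ T : E →L[ℂ] E), ?_, ?_⟩
    · ext x
      have := h2 x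
      rw [hc1, one_smul] at this
      simp [this]
    · simp [h4, hh]

lemma rkOne_pow (u : E) (f : E →L[ℂ] ℂ) (n : ℕ) :
    (rkOne u f) ^ (n + 1) = (f u) ^ n • rkOne u f := by
  induction n with
  | zero => simp
  | succ n ih =>
    rw [pow_succ, ih]
    ext x
    simp only [opMul_apply, smul_apply, rkOne_apply, map_smul, smul_smul]
    congr 1; ring

lemma sandwich (u : E) (f : E →L[ℂ] ℂ) (X : E →L[ℂ] E) (s t : ℕ) (hst : 1 ≤ s + t) :
    ∃ v g, (rkOne u f) ^ s * X * (rkOne u f) ^ t = rkOne v g ∧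
      g v = (f u) ^ (s + t - 1) * f (X u) := by
  rcases s with _ | s
  · rcases t with _ | t
    · omega
    · refine ⟨(f u) ^ t • X u, f, ?_, ?_⟩
      · rw [rkOne_pow]
        ext x
        simp [smul_smul, mul_comm]
      · simp
  · rcases t with _ | t
    · refine ⟨u, (f u) ^ s • (f ∘L X), ?_, ?_⟩
      · rw [rkOne_pow]
        ext x
        simp [smul_smul]
      · simp
    · refine ⟨u, ((f u) ^ s * (f u) ^ t * f (X u)) • f, ?_, ?_⟩
      · rw [rkOne_pow, rkOne_pow]
        ext x
        simp only [opMul_apply, smul_apply, rkOne_apply, map_smul, smul_smul, smul_eq_mul]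
        congr 1; ring
      · have : s + 1 + (t + 1) - 1 = s + t + 1 := by omega
        rw [this]
        simp only [smul_apply, smul_eq_mul]; ring

lemma middle (u : E) (f : E →L[ℂ] ℂ) (X Y : E →L[ℂ] E) :
    X * rkOne u f * Y = rkOne (X u) (f ∘L Y) := by
  ext x; simp

lemma pow_lemma {W : Type*} [AddCommGroup W] [Module ℂ W] (p q : W →ₗ[ℂ] ℂ) (m : ℕ) (hm : m ≠ 0)
    (H : ∀ f, q f ≠ 0 → p f ^ m = q f ^ m) (f0 : W) (h0 : q f0 ≠ 0) (f : W) :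
    p f * q f0 = p f0 * q f := by
  have key : (fun z : ℂ => (p f + z * p f0) ^ m) = fun z : ℂ => (q f + z * q f0) ^ m := by
    refine Continuous.ext_on (s := {-(q f / q f0)}ᶜ) (dense_compl_singleton _)
      (by fun_prop) (by fun_prop) ?_
    intro z hz
    have hne : q (f + z • f0) ≠ 0 := by
      intro h
      apply hz
      simp at h
      rw [Set.mem_singleton_iff, eq_neg_iff_add_eq_zero]
      field_simp
      linear_combination h
    have := H _ hne
    simpa using this
  have h1 := congrFun key (-(q f / q f0))
  have h2 : q f + -(q f / q f0) * q f0 = 0 := by field_simp; ring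
  simp only [h2, zero_pow hm] at h1
  have h3 := eq_zero_of_pow_eq_zero h1
  field_simp at h3
  linear_combination h3

lemma exists_two {u v : E} (hu : u ≠ 0) (hv : v ≠ 0) : ∃ f : E →L[ℂ] ℂ, f u ≠ 0 ∧ f v ≠ 0 := by
  obtain ⟨f, hf⟩ := exists_fun_one hu
  obtain ⟨g, hg⟩ := exists_fun_one hv
  by_cases h1 : f v = 0
  · by_cases h2 : g u = 0
    · exact ⟨f + g, by simp [hf, h2], by simp [hg, h1]⟩
    · exact ⟨g, h2, by simp [hg]⟩
  · exact ⟨f, by simp [hf], h1⟩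

lemma ratio_const (l : E →ₗ[ℂ] (E →L[ℂ] ℂ) →ₗ[ℂ] ℂ) (m : ℕ) (hm : m ≠ 0)
    (H : ∀ u (f : E →L[ℂ] ℂ), f u ≠ 0 → (l u f) ^ m = (f u) ^ m) (u0 : E) (f0 : E →L[ℂ] ℂ)
    (h0 : f0 u0 = 1) (u : E) (f : E →L[ℂ] ℂ) : l u f = l u0 f0 * f u := by
  by_cases hu : u = 0
  · simp [hu]
  have hu0 : u0 ≠ 0 := by rintro rfl; simp at h0
  obtain ⟨f', h1, h2⟩ := exists_two hu hu0
  let ev : E → ((E →L[ℂ] ℂ) →ₗ[ℂ] ℂ) := fun x =>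
    { toFun := fun f => f x, map_add' := fun _ _ => rfl, map_smul' := fun _ _ => rfl }
  have a1 : l u f * f' u = l u f' * f u :=
    pow_lemma (l u) (ev u) m hm (fun f hf => H u f hf) f' h1 f
  have a2 : l u f' * f' u0 = l u0 f' * f' u :=
    pow_lemma (l.flip f') (f' : E →ₗ[ℂ] ℂ) m hm (fun x hx => H x f' hx) u0 h2 u
  have a3 : l u0 f' * f0 u0 = l u0 f0 * f' u0 :=
    pow_lemma (l u0) (ev u0) m hm (fun f hf => H u0 f hf) f0 (by simp [ev, h0]) f'
  rw [h0] at a3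
  have a4 : l u f' = l u0 f0 * f' u := by
    apply mul_right_cancel₀ h2
    linear_combination a2 + f' u * a3
  apply mul_right_cancel₀ h1
  linear_combination a1 + f u * a4

open Classical in
/-- trace of an operator of rank at most one -/
noncomputable def trOne (T : E →L[ℂ] E) : ℂ :=
  if h : RkLe T then h.choose_spec.choose h.choose else 0

lemma trOne_rk (v : E) (g : E →L[ℂ] ℂ) : trOne (rkOne v g) = g v := by
  have h : RkLe (rkOne v g) := ⟨v, g, rfl⟩
  unfold trOne
  rw [dif_pos h]
  exact (tr_unique h.choose_spec.choose_spec).symm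

lemma trOne_add {S T : E →L[ℂ] E} (hS : RkLe S) (hT : RkLe T) (hST : RkLe (S + T)) :
    trOne (S + T) = trOne S + trOne T := by
  obtain ⟨v'', g'', h⟩ := hST
  obtain ⟨v, g, rfl⟩ := hS
  obtain ⟨v', g', rfl⟩ := hT
  rw [h, trOne_rk, trOne_rk, trOne_rk, tr_add h]

lemma trOne_smul {T : E →L[ℂ] E} (hT : RkLe T) (c : ℂ) : trOne (c • T) = c * trOne T := by
  obtain ⟨v, g, rfl⟩ := hT
  have : c • rkOne v g = rkOne v (c • g) := by ext; simp [smul_smul]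
  rw [this, trOne_rk, trOne_rk]; simp

lemma minor_of_lim {T G : E →L[ℂ] E} (H : ∀ z : ℂ, z ≠ 0 → RkLe (T + z • G)) : RkLe T := by
  apply rkLe_of_minor
  intro e e' h
  apply eq_of_fun
  intro k
  have h1 := congrArg k ((H 1 (by norm_num)).minor e e' h)
  have h2 := congrArg k ((H (-1) (by norm_num)).minor e e' h)
  have h3 := congrArg k ((H 2 (by norm_num)).minor e e' h)
  simp only [add_apply, smul_apply, map_add, map_smul, smul_eq_mul] at h1 h2 h3 ⊢
  linear_combination h1 + (1/3 : ℂ) * h2 - (1/3 : ℂ) * h3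

lemma mixed {X Q : E →L[ℂ] E} (hX : RkLe X) (hQ : RkLe Q) (hXQ : RkLe (X + Q))
    (e e' : E) (h : E →L[ℂ] ℂ) :
    h (Q e') • X e + h (X e') • Q e = h (Q e) • X e' + h (X e) • Q e' := by
  have h1 := hX.minor e e' h
  have h2 := hQ.minor e e' h
  have h3 := hXQ.minor e e' h
  simp only [add_apply, map_add, smul_add, add_smul] at h3
  rw [h1, h2] at h3
  apply eq_of_fun
  intro k
  have h4 := congrArg k h3
  simp only [map_add, map_smul, smul_eq_mul] at h4 ⊢
  linear_combination -h4

lemma rk_zero_cases {r : E} {k : E →L[ℂ] ℂ} (h : ∀ x, k x • r = 0) : r = 0 ∨ k = 0 := by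
  by_cases hr : r = 0
  · exact Or.inl hr
  · right; ext x; simpa [hr] using h x

/-- the structure of the bilinear map -/
lemma abstract_struct {U V : Type*} [AddCommGroup U] [Module ℂ U] [AddCommGroup V] [Module ℂ V]
    (B : U →ₗ[ℂ] V →ₗ[ℂ] (E →L[ℂ] E)) (hB : ∀ u f, RkLe (B u f))
    (u0 : U) (f0 : V) (v0 : E) (g0 : E →L[ℂ] ℂ) (S : U →ₗ[ℂ] E) (C : V →ₗ[ℂ] (E →L[ℂ] ℂ))
    (hC : ∀ f, B u0 f = rkOne v0 (C f)) (hS : ∀ u, B u f0 = rkOne (S u) g0)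
    (α : U →ₗ[ℂ] ℂ) (β : V →ₗ[ℂ] ℂ) (hα0 : α u0 = 1) (hβ0 : β f0 = 1)
    (hα : ∀ u, g0 (S u) = α u) (hβ : ∀ f, C f v0 = β f)
    (hg0 : g0 v0 = 1) (hS0 : S u0 = v0) (hC0 : C f0 = g0)
    (hpair : ∀ u f, g0 (B u f v0) = α u * β f)
    (hinj : ∀ u f, α u ≠ 0 → β f ≠ 0 → B u f = (α u * β f) • rkOne v0 g0 →
      u = α u • u0 ∧ f = β f • f0) (u : U) (f : V) : B u f = rkOne (S u) (C f) := by
  have main : ∀ u f, α u ≠ 0 → β f ≠ 0 → B u f = rkOne (S u) (C f) := by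
    intro u f ha hb
    by_cases hu : u = α u • u0
    · have h1 : S u = α u • v0 := by conv_lhs => rw [hu, map_smul, hS0]
      conv_lhs => rw [hu]
      rw [map_smul, LinearMap.smul_apply, hC, h1]
      ext x; simp [smul_smul, mul_comm]
    by_cases hf : f = β f • f0
    · have h1 : C f = β f • g0 := by conv_lhs => rw [hf, map_smul, hC0]
      conv_lhs => rw [hf]
      rw [map_smul, hS, h1]
      ext x; simp [smul_smul]
    set X := B u f with hX
    have hXr := hB u f
    rw [← hX] at hXr
    have hab := hpair u f
    rw [← hX] at hab
    have hXe : ∀ e, (α u * β f) • X e = g0 (X e) • X v0 := by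
      intro e
      rw [← hab]; exact hXr.minor v0 e g0
    have m1 := mixed hXr (hB u f0) (by rw [hX, ← map_add]; exact hB _ _)
    have m2 := mixed hXr (hB u0 f) (by
      rw [hX, ← LinearMap.add_apply, ← map_add]; exact hB _ _)
    have c1 : ∀ x, (α u • g0 - (β f)⁻¹ • (g0 ∘L X)) x • (X v0 - β f • S u) = 0 := by
      intro x
      have := m1 v0 x g0
      simp only [hS, rkOne_apply, map_smul, hα, hg0, hab, smul_eq_mul, one_smul] at this
      apply eq_of_fun
      intro k
      have t1 := congrArg k this
      have t2 := congrArg k (hXe x)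
      simp only [map_add, map_smul, map_sub, smul_eq_mul, sub_apply, smul_apply, comp_apply,
        map_zero] at t1 t2 ⊢
      field_simp
      linear_combination β f * t1 + t2
    have c2 : ∀ x, (C f - (α u)⁻¹ • (g0 ∘L X)) x • (X v0 - (α u * β f) • v0) = 0 := by
      intro x
      have := m2 v0 x g0
      simp only [hC, rkOne_apply, map_smul, hβ, hg0, hab, smul_eq_mul, mul_one] at this
      apply eq_of_fun
      intro k
      have t1 := congrArg k this
      have t2 := congrArg k (hXe x)
      simp only [map_add, map_smul, map_sub, smul_eq_mul, sub_apply, smul_apply, comp_apply,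
        map_zero] at t1 t2 ⊢
      field_simp
      linear_combination α u * t1 + t2
    have XX : ∀ e, X e = (α u * β f)⁻¹ • g0 (X e) • X v0 := by
      intro e
      rw [← hXe, smul_smul, inv_mul_cancel₀ (mul_ne_zero ha hb), one_smul]
    rcases rk_zero_cases c1 with r1 | k1
    · rw [sub_eq_zero] at r1
      rcases rk_zero_cases c2 with r2 | k2
      · exfalso
        rw [sub_eq_zero, r1, mul_comm, ← smul_smul] at r2
        have h3 : S u = α u • v0 := smul_right_injective _ hb r2
        refine hu (hinj u f0 ha (by simp [hβ0]) ?_).1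
        rw [hS, h3, hβ0]
        ext x; simp [smul_smul, mul_comm]
      · rw [sub_eq_zero] at k2
        ext e
        have : C f e = (α u)⁻¹ * g0 (X e) := by rw [k2]; simp
        rw [XX, r1, rkOne_apply, this]
        simp only [smul_smul]
        congr 1; field_simp
    · rw [sub_eq_zero] at k1
      have k1' : ∀ x, g0 (X x) = α u * β f * g0 x := by
        intro x
        have := congrArg (fun k : E →L[ℂ] ℂ => k x) k1
        simp at this
        field_simp at this
        linear_combination -this
      rcases rk_zero_cases c2 with r2 | k2
      · exfalso
        rw [sub_eq_zero] at r2
        refine hu (hinj u f ha hb ?_).1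
        ext e
        rw [← hX, XX, r2, k1']
        simp only [smul_smul, smul_apply, rkOne_apply]
        congr 1; field_simp
      · exfalso
        rw [sub_eq_zero] at k2
        have : C f = β f • g0 := by
          rw [k2]; ext x; simp [k1']; field_simp
        refine hf (hinj u0 f (by simp [hα0]) hb ?_).2
        rw [hC, this, hα0]
        ext x; simp [smul_smul, mul_comm]
  have step : ∀ u f, α u ≠ 0 → B u f = rkOne (S u) (C f) := by
    intro u f ha
    by_cases hb : β f = 0
    · have h1 := main u (f + f0) ha (by simp [hb, hβ0])
      have h2 := main u f0 ha (by simp [hβ0])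
      have : B u f = B u (f + f0) - B u f0 := by rw [map_add]; simp
      rw [this, h1, h2]
      ext x; simp [add_smul]
    · exact main u f ha hb
  by_cases ha : α u = 0
  · have h1 := step (u + u0) f (by simp [ha, hα0])
    have h2 := step u0 f (by simp [hα0])
    have : B u f = B (u + u0) f - B u0 f := by rw [map_add]; simp
    rw [this, h1, h2]
    ext x; simp
  · exact step u f ha

/-- the final step: from the structure to the implementing operator -/
lemma abstract_final [CompleteSpace E] [Nontrivial E] {U V : Type*} [NormedAddCommGroup U]
    [NormedSpace ℂ U] [CompleteSpace U] {A : Type*} (Φ : A → (E →L[ℂ] E)) (D : A → (U →L[ℂ] U))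
    (hD : Function.Injective D) (hΦ : ∀ v g, ∃ a, Φ a = rkOne v g)
    (p : V → (U →L[ℂ] ℂ)) (hp : ∀ x, (∀ v, p v x = 0) → x = 0)
    (S : U →ₗ[ℂ] E) (C : V → (E →L[ℂ] ℂ)) (hCS : ∀ v x, C v (S x) = p v x)
    (H : ∀ a v x, C v (Φ a (S x)) = p v (D a x)) :
    ∃ S' : U ≃L[ℂ] E, ∀ a, Φ a = (S' : U →L[ℂ] E) ∘L D a ∘L (S'.symm : E →L[ℂ] U) := by
  have contra : ∀ (w : E) (h : E →L[ℂ] ℂ), w ≠ 0 → h ≠ 0 → ¬ (∀ v x, h (S x) * C v w = 0) := by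
    intro w h hw hh hc
    obtain ⟨a, ha⟩ := hΦ w h
    obtain ⟨b, hb⟩ := hΦ ((2 : ℂ) • w) h
    have h1 : D a = 0 := by
      ext x
      apply hp
      intro v
      rw [← H, ha]
      simpa using hc v x
    have h2 : D b = 0 := by
      ext x
      apply hp
      intro v
      rw [← H, hb]
      simp only [rkOne_apply, map_smul, smul_eq_mul]
      linear_combination 2 * hc v x
    have hab : a = b := hD (h1.trans h2.symm)
    rw [hab, hb] at ha
    obtain ⟨x, hx⟩ : ∃ x, h x ≠ 0 := by
      by_contra! hc; exact hh (by ext x; simp [hc x])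
    have := congrArg (fun T : E →L[ℂ] E => T x) ha
    simp only [rkOne_apply] at this
    have h3 := smul_right_injective _ hx this
    have : w = 0 := by
      calc w = (2 : ℂ) • w - w := by module
        _ = 0 := by rw [h3, sub_self]
    exact hw this
  obtain ⟨w0, hw0⟩ := exists_ne (0 : E)
  obtain ⟨h0, hh0⟩ := exists_fun_one hw0
  have hh0' : h0 ≠ 0 := by rintro rfl; simp at hh0
  have nd2 : ∀ w, (∀ v, C v w = 0) → w = 0 := by
    intro w hw
    by_contra hne
    exact contra w h0 hne hh0' (fun v x => by rw [hw, mul_zero])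
  have nd1 : ∀ h : E →L[ℂ] ℂ, h ≠ 0 → ∃ x, h (S x) ≠ 0 := by
    intro h hh
    by_contra! hc
    exact contra w0 h hw0 hh (fun v x => by rw [hc, zero_mul])
  have nd2' : ∀ w w', (∀ v, C v w = C v w') → w = w' := by
    intro w w' h
    exact sub_eq_zero.1 (nd2 _ (fun v => by rw [map_sub, h, sub_self]))
  have hsurj : Function.Surjective S := by
    intro w
    obtain ⟨x, hx⟩ := nd1 h0 hh0'
    obtain ⟨a, ha⟩ := hΦ w h0
    refine ⟨(h0 (S x))⁻¹ • D a x, nd2' _ _ fun v => ?_⟩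
    rw [hCS, map_smul, ← H, ha]
    simp only [rkOne_apply, map_smul, smul_eq_mul]
    field_simp
  have hinj : Function.Injective S := by
    rw [← LinearMap.ker_eq_bot, LinearMap.ker_eq_bot']
    intro x hx
    apply hp
    intro v
    rw [← hCS, hx, map_zero]
  have hcont : ∀ h : E →L[ℂ] ℂ, Continuous fun x => h (S x) := by
    intro h
    obtain ⟨v, hv⟩ : ∃ v, C v w0 ≠ 0 := by
      by_contra! hc; exact hw0 (nd2 _ hc)
    obtain ⟨a, ha⟩ := hΦ w0 h
    have : (fun x => h (S x)) = fun x => (C v w0)⁻¹ * p v (D a x) := by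
      funext x
      rw [← H, ha]
      simp only [rkOne_apply, map_smul, smul_eq_mul]
      field_simp
    rw [this]
    fun_prop
  have Scont : Continuous S := by
    apply LinearMap.continuous_of_seq_closed_graph
    intro x x0 y hx hy
    apply eq_of_fun
    intro h
    refine tendsto_nhds_unique ((h.continuous.tendsto y).comp hy) ?_
    exact ((hcont h).tendsto x0).comp hx
  let Sc : U →L[ℂ] E := ⟨S, Scont⟩
  let S' : U ≃L[ℂ] E := ContinuousLinearEquiv.ofBijective Sc
    (LinearMap.ker_eq_bot.2 hinj) (LinearMap.range_eq_top.2 hsurj)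
  refine ⟨S', fun a => ?_⟩
  ext w
  obtain ⟨x, rfl⟩ := hsurj w
  have e1 : S'.symm (S x) = x := S'.symm_apply_apply x
  have e2 : Φ a (S x) = S (D a x) := nd2' _ _ fun v => by rw [H, hCS]
  simp only [comp_apply, ContinuousLinearEquiv.coe_coe, e1, e2]
  rfl

lemma union_sub {W : Type*} [AddCommGroup W] (P Q : W → Prop)
    (hP : ∀ a b, P a → P b → P (a - b)) (hQ : ∀ a b, Q a → Q b → Q (a - b))
    (h : ∀ a, P a ∨ Q a) : (∀ a, P a) ∨ (∀ a, Q a) := by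
  by_contra! hc
  obtain ⟨⟨a, ha⟩, ⟨b, hb⟩⟩ := hc
  have ha' := (h a).resolve_left ha
  have hb' := (h b).resolve_right hb
  rcases h (a + b) with h1 | h1
  · exact ha (by simpa using hP _ _ h1 hb')
  · exact hb (by simpa using hQ _ _ h1 ha')

lemma dichotomy {V : Type*} [AddCommGroup V] [Module ℂ V] (L : V →ₗ[ℂ] (E →L[ℂ] E))
    (hL : ∀ f, RkLe (L f)) (f0 : V) (v0 : E) (g0 : E →L[ℂ] ℂ) (h0 : L f0 = rkOne v0 g0)
    (hg : g0 v0 = 1) :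
    (∀ f, L f = rkOne v0 (g0 ∘L L f)) ∨ (∀ f, L f = rkOne (L f v0) g0) := by
  apply union_sub
  · intro a b ha hb
    rw [map_sub]
    ext x
    have h1 := congrArg (fun T : E →L[ℂ] E => T x) ha
    have h2 := congrArg (fun T : E →L[ℂ] E => T x) hb
    simp only [rkOne_apply, comp_apply] at h1 h2
    simp only [sub_apply, rkOne_apply, comp_apply, map_sub, sub_smul]
    rw [← h1, ← h2]
  · intro a b ha hb
    rw [map_sub]
    ext x
    have h1 := congrArg (fun T : E →L[ℂ] E => T x) ha
    have h2 := congrArg (fun T : E →L[ℂ] E => T x) hb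
    simp only [rkOne_apply] at h1 h2
    simp only [sub_apply, rkOne_apply, smul_sub]
    rw [← h1, ← h2]
  · intro f
    have m := mixed (hL f) (hL f0) (by rw [← map_add]; exact hL _)
    obtain ⟨v, g, hvg⟩ := hL f
    have key : ∀ x, (g - g v0 • g0) x • (v - g0 v • v0) = 0 := by
      intro x
      have := m v0 x g0
      simp only [h0, hvg, rkOne_apply, map_smul, hg, smul_eq_mul] at this
      apply eq_of_fun
      intro k
      have t := congrArg k this
      simp only [map_add, map_smul, map_sub, smul_eq_mul, sub_apply, smul_apply,
        map_zero, mul_one, one_mul] at t ⊢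
      linear_combination -t
    rcases rk_zero_cases key with h | h
    · left
      rw [sub_eq_zero] at h
      rw [hvg]
      ext x
      simp only [rkOne_apply, comp_apply, map_smul, smul_eq_mul]
      conv_lhs => rw [h]
      rw [smul_smul]
    · right
      rw [sub_eq_zero] at h
      rw [hvg]
      ext x
      have hx : g x = g v0 * g0 x := by conv_lhs => rw [h]; simp
      simp only [rkOne_apply]
      rw [hx, smul_smul, mul_comm]

lemma RkLe.mul_right {T : E →L[ℂ] E} (hT : RkLe T) (X : E →L[ℂ] E) : RkLe (T * X) := by
  obtain ⟨v, g, rfl⟩ := hT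
  exact ⟨v, g ∘L X, by ext; simp⟩

lemma trOne_mul (v : E) (g : E →L[ℂ] ℂ) (X : E →L[ℂ] E) : trOne (rkOne v g * X) = g (X v) := by
  have : rkOne v g * X = rkOne v (g ∘L X) := by ext; simp
  rw [this, trOne_rk]; rfl

lemma phase_two [CompleteSpace E] [Nontrivial E] (A : Subalgebra ℂ (E →L[ℂ] E))
    (hA1 : ∀ v g, rkOne v g ∈ A) (Φ : A → (E →L[ℂ] E)) (hΦ : ∀ v g, ∃ a, Φ a = rkOne v g)
    (B : E →ₗ[ℂ] (E →L[ℂ] ℂ) →ₗ[ℂ] (E →L[ℂ] E)) (hB : ∀ u f, RkLe (B u f))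
    (pair : ∀ u f a w h, Φ a = rkOne w h → h (B u f w) = f ((a : E →L[ℂ] E) u))
    (hBΦ : ∀ u f, f u ≠ 0 → B u f = Φ ⟨rkOne u f, hA1 u f⟩)
    (hval : ∀ u f a, f u ≠ 0 → trOne (B u f * Φ a) = f ((a : E →L[ℂ] E) u))
    (htr : ∀ u f, trOne (B u f) = f u) :
    (∃ S : E ≃L[ℂ] E, ∀ a : A, Φ a =
        (S : E →L[ℂ] E) ∘L (a : E →L[ℂ] E) ∘L (S.symm : E →L[ℂ] E)) ∨
    (∃ S : (E →L[ℂ] ℂ) ≃L[ℂ] E, ∀ a : A, Φ a =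
        (S : (E →L[ℂ] ℂ) →L[ℂ] E) ∘L dualOp (a : E →L[ℂ] E) ∘L
              (S.symm : E →L[ℂ] (E →L[ℂ] ℂ))) := by
  obtain ⟨u0, hu0⟩ := exists_ne (0 : E)
  obtain ⟨f0, hf0⟩ := exists_fun_one hu0
  obtain ⟨v0, g0, h0⟩ := hB u0 f0
  have htr' : ∀ u f v g, B u f = rkOne v g → g v = f u := by
    intro u f v g h
    rw [← htr u f, h, trOne_rk]
  have hg0 : g0 v0 = 1 := by rw [htr' _ _ _ _ h0, hf0]
  have hval0 : ∀ u f a, trOne (B u f * Φ a) = f ((a : E →L[ℂ] E) u) := by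
    intro u f a
    by_cases h : f u = 0
    · by_cases hu : u = 0
      · subst hu
        have : B 0 f * Φ a = rkOne 0 0 := by ext; simp
        rw [this, trOne_rk]; simp
      · obtain ⟨g, hg⟩ := exists_fun_one hu
        have h1 := hval u (f + g) a (by simp [h, hg])
        have h2 := hval u g a (by simp [hg])
        rw [map_add, add_mul, trOne_add ((hB _ _).mul_right _) ((hB _ _).mul_right _)
          (by rw [← add_mul, ← map_add]; exact (hB _ _).mul_right _), h2] at h1
        simpa using h1
    · exact hval u f a h
  have hval' : ∀ u f a v g, B u f = rkOne v g → g (Φ a v) = f ((a : E →L[ℂ] E) u) := by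
    intro u f a v g h
    rw [← hval0, h, trOne_mul]
  have pairR : ∀ u f u' f' w h, f' u' ≠ 0 → B u' f' = rkOne w h → h (B u f w) = f' u * f u' := by
    intro u f u' f' w h hne hw
    rw [hBΦ u' f' hne] at hw
    rw [pair u f _ w h hw]; simp
  have hpair0 : ∀ u f, g0 (B u f v0) = f0 u * f u0 := fun u f =>
    pairR u f u0 f0 v0 g0 (by simp [hf0]) h0
  have hinj : ∀ u (f : E →L[ℂ] ℂ), f0 u ≠ 0 → f u0 ≠ 0 →
      B u f = (f0 u * f u0) • rkOne v0 g0 → u = f0 u • u0 ∧ f = f u0 • f0 := by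
    intro u f hu hf hh
    rw [← h0] at hh
    constructor
    · have : ∀ f' : E →L[ℂ] ℂ, f' u0 ≠ 0 → f' u = f0 u * f' u0 := by
        intro f' hf'
        obtain ⟨w, h, hw⟩ := hB u0 f'
        have h1 := pairR u f u0 f' w h hf' hw
        have h2 := pairR u0 f0 u0 f' w h hf' hw
        rw [hh] at h1
        simp only [smul_apply, map_smul, smul_eq_mul, h2, hf0] at h1
        apply mul_right_cancel₀ hf
        linear_combination -h1
      apply eq_of_fun
      intro f'
      simp only [map_smul, smul_eq_mul]
      by_cases hf' : f' u0 = 0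
      · have := this (f' + f0) (by simp [hf', hf0])
        simp [hf', hf0] at this
        simp [this, hf']
      · exact this f' hf'
    · have : ∀ x, f0 x ≠ 0 → f x = f u0 * f0 x := by
        intro x hx
        obtain ⟨w, h, hw⟩ := hB x f0
        have h1 := pairR u f x f0 w h hx hw
        have h2 := pairR u0 f0 x f0 w h hx hw
        rw [hh] at h1
        simp only [smul_apply, map_smul, smul_eq_mul, h2, hf0] at h1
        apply mul_left_cancel₀ hu
        linear_combination -h1
      ext x
      simp only [smul_apply, smul_eq_mul]
      by_cases hx : f0 x = 0
      · have := this (x + u0) (by simp [hx, hf0])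
        simp [hx, hf0] at this
        simp [this, hx]
      · exact this x hx
  let ev : (E →L[ℂ] ℂ) →ₗ[ℂ] ℂ :=
    { toFun := fun f => f u0, map_add' := fun _ _ => rfl, map_smul' := fun _ _ => rfl }
  -- the linear maps attached to the base point
  let S1 : E →ₗ[ℂ] E :=
    { toFun := fun u => B u f0 v0, map_add' := by intros; simp, map_smul' := by intros; simp }
  let C1 : (E →L[ℂ] ℂ) →ₗ[ℂ] (E →L[ℂ] ℂ) :=
    { toFun := fun f => g0 ∘L B u0 f, map_add' := by intros; ext; simp,
      map_smul' := by intros; ext; simp }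
  let S2 : (E →L[ℂ] ℂ) →ₗ[ℂ] E :=
    { toFun := fun f => B u0 f v0, map_add' := by intros; simp, map_smul' := by intros; simp }
  let C2 : E →ₗ[ℂ] (E →L[ℂ] ℂ) :=
    { toFun := fun u => g0 ∘L B u f0, map_add' := by intros; ext; simp,
      map_smul' := by intros; ext; simp }
  have case1 : (∀ f, B u0 f = rkOne v0 (g0 ∘L B u0 f)) → (∀ u, B u f0 = rkOne (B u f0 v0) g0) →
      (∃ S : E ≃L[ℂ] E, ∀ a : A, Φ a =
        (S : E →L[ℂ] E) ∘L (a : E →L[ℂ] E) ∘L (S.symm : E →L[ℂ] E)) := by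
    intro hC hS
    have st : ∀ u f, B u f = rkOne (S1 u) (C1 f) := by
      refine abstract_struct B hB u0 f0 v0 g0 S1 C1 hC hS (f0 : E →ₗ[ℂ] ℂ) ev hf0 hf0
        (fun u => htr' _ _ _ _ (hS u)) (fun f => htr' _ _ _ _ (hC f)) hg0 ?_ ?_ hpair0 hinj
      · simp [S1, h0, hg0]
      · ext x; simp [C1, h0, hg0]
    exact abstract_final Φ (fun a : A => (a : E →L[ℂ] E)) Subtype.val_injective hΦ
      (fun f : E →L[ℂ] ℂ => f) (fun x hx => eq_of_fun (by simpa using hx)) S1 (fun f => C1 f)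
      (fun f u => htr' _ _ _ _ (st u f)) (fun a f u => hval' _ _ a _ _ (st u f))
  have case2 : (∀ u, B u f0 = rkOne v0 (g0 ∘L B u f0)) → (∀ f, B u0 f = rkOne (B u0 f v0) g0) →
      (∃ S : (E →L[ℂ] ℂ) ≃L[ℂ] E, ∀ a : A, Φ a =
        (S : (E →L[ℂ] ℂ) →L[ℂ] E) ∘L dualOp (a : E →L[ℂ] E) ∘L
              (S.symm : E →L[ℂ] (E →L[ℂ] ℂ))) := by
    intro hC hS
    have st : ∀ f u, B.flip f u = rkOne (S2 f) (C2 u) := by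
      refine abstract_struct B.flip (fun f u => hB u f) f0 u0 v0 g0 S2 C2 hC hS ev
        (f0 : E →ₗ[ℂ] ℂ) hf0 hf0
        (fun u => htr' _ _ _ _ (hS u)) (fun f => htr' _ _ _ _ (hC f)) hg0 ?_ ?_
        (fun f u => by rw [mul_comm]; exact hpair0 u f)
        (fun f u hf hu hh => (hinj u f hu hf (by rw [mul_comm]; exact hh)).symm)
      · simp [S2, h0, hg0]
      · ext x; simp [C2, h0, hg0]
    have hDinj : Function.Injective (fun a : A => dualOp (a : E →L[ℂ] E)) := by
      intro a b hab
      apply Subtype.ext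
      ext x
      apply eq_of_fun
      intro f
      have := congrArg (fun T : (E →L[ℂ] ℂ) →L[ℂ] (E →L[ℂ] ℂ) => T f x) hab
      simpa [dualOp] using this
    refine abstract_final Φ (fun a : A => dualOp (a : E →L[ℂ] E)) hDinj hΦ
      (fun u : E => ContinuousLinearMap.apply ℂ ℂ u) (fun f hf => by ext x; exact hf x)
      S2 (fun u => C2 u)
      (fun u f => htr' _ _ _ _ (st f u)) (fun a u f => ?_)
    rw [hval' _ _ a _ _ (st f u)]
    rfl
  have collapse : (∀ u (f : E →L[ℂ] ℂ), f0 u ≠ 0 → f u = f0 u * f u0) →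
      (∃ S : E ≃L[ℂ] E, ∀ a : A, Φ a =
        (S : E →L[ℂ] E) ∘L (a : E →L[ℂ] E) ∘L (S.symm : E →L[ℂ] E)) := by
    intro hc
    have hu1 : ∀ u, f0 u ≠ 0 → u = f0 u • u0 := by
      intro u hu
      apply eq_of_fun
      intro f
      rw [hc u f hu]; simp
    have hu : ∀ u, u = f0 u • u0 := by
      intro u
      by_cases h : f0 u = 0
      · have := hu1 (u + u0) (by simp [h, hf0])
        simp [h, hf0] at this
        simp [this]
      · exact hu1 u h
    have hf : ∀ f : E →L[ℂ] ℂ, f = f u0 • f0 := by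
      intro f
      ext x
      conv_lhs => rw [hu x]
      simp [mul_comm]
    apply case1
    · intro f
      rw [hf f, map_smul, h0]
      ext x; simp [hg0, smul_smul]
    · intro u
      rw [hu u, map_smul, LinearMap.smul_apply, h0]
      ext x; simp [hg0, smul_smul, mul_comm]
  rcases dichotomy (B u0) (hB u0) f0 v0 g0 h0 hg0 with hL | hL
  · rcases dichotomy (B.flip f0) (fun u => hB u f0) u0 v0 g0 h0 hg0 with hL' | hL'
    · left
      apply collapse
      intro u f hu
      have h1 := pairR u0 f u f0 _ _ hu (hL' u)
      have h2 := htr' _ _ _ _ (hL f)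
      have h3 : (g0 ∘L B u f0) v0 = f0 u := htr' _ _ _ _ (hL' u)
      rw [hL f] at h1
      simp only [rkOne_apply, map_smul, smul_eq_mul] at h1
      rw [h2] at h1
      have h4 : (g0 ∘L (B.flip f0 u)) v0 = f0 u := h3
      rw [h4, hf0] at h1
      linear_combination -h1
    · left
      exact case1 hL hL'
  · rcases dichotomy (B.flip f0) (fun u => hB u f0) u0 v0 g0 h0 hg0 with hL' | hL'
    · right
      exact case2 hL' hL
    · left
      apply collapse
      intro u f hu
      have h1 := pairR u0 f u f0 _ _ hu (hL' u)
      have h2 := htr' _ _ _ _ (hL f)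
      have h3 : g0 (B.flip f0 u v0) = f0 u := htr' _ _ _ _ (hL' u)
      rw [hL f] at h1
      simp only [rkOne_apply, map_smul, smul_eq_mul] at h1
      rw [h2, h3, hf0] at h1
      linear_combination -h1

lemma core [CompleteSpace E] [Nontrivial E] (A : Subalgebra ℂ (E →L[ℂ] E))
    (hA1 : ∀ v g, rkOne v g ∈ A) (s t : ℕ) (hst : 1 ≤ s + t) (φ : A → A)
    (hr : ∀ x y h k, ∃ a, (φ a : E →L[ℂ] E) = rkOne x h + rkOne y k)
    (hc : ∀ x y : A, RkLe (x : E →L[ℂ] E) ∨ RkLe (y : E →L[ℂ] E) →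
      ∃ θ : A → A, IsAlgAutomorphism θ ∧ φ y ^ s * φ x * φ y ^ t = θ (y ^ s * x * y ^ t)) :
    ∃ ξ : ℂ, ξ ^ (s + t + 1) = 1 ∧
      ((∃ S : E ≃L[ℂ] E, ∀ a : A,
          (φ a : E →L[ℂ] E) =
            ξ • ((S : E →L[ℂ] E) ∘L (a : E →L[ℂ] E) ∘L (S.symm : E →L[ℂ] E))) ∨
       (∃ S : (E →L[ℂ] ℂ) ≃L[ℂ] E, ∀ a : A,
          (φ a : E →L[ℂ] E) =
            ξ • ((S : (E →L[ℂ] ℂ) →L[ℂ] E) ∘L dualOp (a : E →L[ℂ] E) ∘L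
              (S.symm : E →L[ℂ] (E →L[ℂ] ℂ))))) := by
  have hr1 : ∀ v g, ∃ a, (φ a : E →L[ℂ] E) = rkOne v g := by
    intro v g
    obtain ⟨a, ha⟩ := hr v 0 g 0
    exact ⟨a, by rw [ha]; ext; simp⟩
  obtain ⟨N, hN⟩ : ∃ N, s + t = N + 1 := ⟨s + t - 1, by omega⟩
  let R : E → (E →L[ℂ] ℂ) → A := fun u f => ⟨rkOne u f, hA1 u f⟩
  have K : ∀ u f, ∃ v g, (φ (R u f) : E →L[ℂ] E) = rkOne v g ∧
      ∀ a, g v ^ N * g ((φ a : E →L[ℂ] E) v) = f u ^ N * f ((a : E →L[ℂ] E) u) := by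
    intro u f
    have hrk : RkLe (φ (R u f) : E →L[ℂ] E) := by
      by_contra hn
      obtain ⟨x, y, h, k, H⟩ := rank_two_test hn
      obtain ⟨a, ha⟩ := hr x y h k
      obtain ⟨θ, hθ, he⟩ := hc (R u f) a (Or.inl ⟨u, f, rfl⟩)
      obtain ⟨v', g', h1, -⟩ := theta_rk hA1 hθ (T := a ^ s * R u f * a ^ t)
        (v := ((a : E →L[ℂ] E) ^ s) u) (g := f ∘L ((a : E →L[ℂ] E) ^ t))
        (by rw [← middle]; rfl)
      apply H s t
      refine ⟨v', g', ?_⟩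
      rw [← h1, ← he, ← ha]; rfl
    obtain ⟨v, g, hvg⟩ := hrk
    refine ⟨v, g, hvg, fun a => ?_⟩
    obtain ⟨θ, hθ, he⟩ := hc a (R u f) (Or.inr ⟨u, f, rfl⟩)
    obtain ⟨w, k, h1, h2⟩ := sandwich u f (a : E →L[ℂ] E) s t hst
    obtain ⟨w', k', h3, h4⟩ := sandwich v g (φ a : E →L[ℂ] E) s t hst
    obtain ⟨w'', k'', h5, h6⟩ := theta_rk hA1 hθ (T := R u f ^ s * a * R u f ^ t) h1
    rw [← he] at h5
    have h7 : rkOne v g ^ s * (φ a : E →L[ℂ] E) * rkOne v g ^ t = rkOne w'' k'' := by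
      rw [← h5, ← hvg]; rfl
    rw [h3] at h7
    have hN' : s + t - 1 = N := by omega
    rw [hN'] at h2 h4
    rw [← h4, ← h2, ← h6]
    exact tr_unique h7
  choose V G hVG hK using K
  have hpow : ∀ u f, (G u f (V u f)) ^ (N + 2) = (f u) ^ (N + 2) := by
    intro u f
    have := hK u f (R u f)
    rw [hVG] at this
    simp only [R, rkOne_apply, map_smul, smul_eq_mul] at this
    linear_combination this
  let Ψ : E → (E →L[ℂ] ℂ) → (E →L[ℂ] E) := fun u f =>
    (G u f (V u f) / f u) ^ N • rkOne (V u f) (G u f)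
  let Rep : (E →L[ℂ] E) → E → (E →L[ℂ] ℂ) → Prop := fun T u f =>
    ∀ (a : A) (w : E) (h : E →L[ℂ] ℂ), (φ a : E →L[ℂ] E) = rkOne w h →
      h (T w) = f ((a : E →L[ℂ] E) u)
  have hRepΨ : ∀ u f, f u ≠ 0 → Rep (Ψ u f) u f := by
    intro u f hfu a w h ha
    have := hK u f a
    rw [ha] at this
    simp only [rkOne_apply, map_smul, smul_eq_mul] at this
    simp only [Ψ, smul_apply, rkOne_apply, map_smul, smul_eq_mul, div_pow]
    have hne : f u ^ N ≠ 0 := pow_ne_zero _ hfu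
    field_simp
    linear_combination this
  have huniq : ∀ T T' u f, Rep T u f → Rep T' u f → T = T' := by
    intro T T' u f h1 h2
    ext w
    apply eq_of_fun
    intro h
    obtain ⟨a, ha⟩ := hr1 w h
    rw [h1 a w h ha, h2 a w h ha]
  have hex : ∀ u f, ∃ T, Rep T u f := by
    intro u f
    by_cases hfu : f u = 0
    · by_cases hu : u = 0
      · exact ⟨0, fun a w h _ => by simp [hu]⟩
      · obtain ⟨g, hg⟩ := exists_fun_one hu
        refine ⟨Ψ u (f + g) - Ψ u g, fun a w h ha => ?_⟩
        have h1 := hRepΨ u (f + g) (by simp [hfu, hg]) a w h ha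
        have h2 := hRepΨ u g (by simp [hg]) a w h ha
        rw [sub_apply, map_sub, h1, h2]; simp
    · exact ⟨_, hRepΨ u f hfu⟩
  choose B0 hB0 using hex
  let B : E →ₗ[ℂ] (E →L[ℂ] ℂ) →ₗ[ℂ] (E →L[ℂ] E) := LinearMap.mk₂ ℂ B0
    (fun u u' f => huniq _ _ _ _ (hB0 _ _) (fun a w h ha => by
      rw [add_apply, map_add, hB0 u f a w h ha, hB0 u' f a w h ha, map_add, map_add]))
    (fun c u f => huniq _ _ _ _ (hB0 _ _) (fun a w h ha => by
      rw [smul_apply, map_smul, hB0 u f a w h ha, map_smul, map_smul]))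
    (fun u f f' => huniq _ _ _ _ (hB0 _ _) (fun a w h ha => by
      rw [add_apply, map_add, hB0 u f a w h ha, hB0 u f' a w h ha, add_apply]))
    (fun c u f => huniq _ _ _ _ (hB0 _ _) (fun a w h ha => by
      rw [smul_apply, map_smul, hB0 u f a w h ha, smul_apply]))
  have hBRep : ∀ u f, Rep (B u f) u f := hB0
  have hBΨ : ∀ u f, f u ≠ 0 → B u f = Ψ u f := fun u f h =>
    huniq _ _ _ _ (hBRep u f) (hRepΨ u f h)
  have smul_rk : ∀ (c : ℂ) (v : E) (g : E →L[ℂ] ℂ), c • rkOne v g = rkOne v (c • g) := by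
    intro c v g; ext; simp [smul_smul]
  have hBrk1 : ∀ u f, f u ≠ 0 → RkLe (B u f) := by
    intro u f h
    rw [hBΨ u f h]
    exact ⟨_, _, smul_rk _ _ _⟩
  have hBrk : ∀ u f, RkLe (B u f) := by
    intro u f
    by_cases hfu : f u = 0
    · by_cases hu : u = 0
      · exact ⟨0, 0, by rw [hu]; ext; simp⟩
      · obtain ⟨g, hg⟩ := exists_fun_one hu
        apply minor_of_lim (G := B u g)
        intro z hz
        rw [← map_smul, ← map_add]
        exact hBrk1 _ _ (by simp [hfu, hg, hz])
    · exact hBrk1 u f hfu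
  let l : E →ₗ[ℂ] (E →L[ℂ] ℂ) →ₗ[ℂ] ℂ := LinearMap.mk₂ ℂ (fun u f => trOne (B u f))
    (fun u u' f => by
      have := hBrk (u + u') f
      rw [map_add, LinearMap.add_apply] at this ⊢
      exact trOne_add (hBrk _ _) (hBrk _ _) this)
    (fun c u f => by
      rw [map_smul, LinearMap.smul_apply]
      exact trOne_smul (hBrk _ _) c)
    (fun u f f' => by
      have := hBrk u (f + f')
      rw [map_add] at this ⊢
      exact trOne_add (hBrk _ _) (hBrk _ _) this)
    (fun c u f => by
      rw [map_smul]
      exact trOne_smul (hBrk _ _) c)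
  have hl : ∀ u f, l u f = trOne (B u f) := fun _ _ => rfl
  have hlΨ : ∀ u f, f u ≠ 0 → l u f = (G u f (V u f) / f u) ^ N * G u f (V u f) := by
    intro u f h
    rw [hl, hBΨ u f h]; simp only [Ψ]; rw [smul_rk, trOne_rk]; simp
  have hlam : ∀ u f, f u ≠ 0 → (G u f (V u f) / f u) ^ (N + 2) = 1 := by
    intro u f h
    rw [div_pow, hpow, div_self (pow_ne_zero _ h)]
  have hlpow : ∀ u f, f u ≠ 0 → (l u f) ^ (N + 2) = (f u) ^ (N + 2) := by
    intro u f h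
    rw [hlΨ u f h, mul_pow, ← pow_mul, mul_comm N, pow_mul, hlam u f h, one_pow, one_mul, hpow]
  obtain ⟨u0, hu0⟩ := exists_ne (0 : E)
  obtain ⟨f0, hf0⟩ := exists_fun_one hu0
  have hlc := ratio_const l (N + 2) (by omega) hlpow u0 f0 hf0
  set η := l u0 f0 with hη
  have hη1 : η ^ (N + 2) = 1 := by
    rw [hη, hlpow u0 f0 (by simp [hf0]), hf0, one_pow]
  have hη0 : η ≠ 0 := by
    intro h; rw [h] at hη1; simp at hη1
  have hlamη : ∀ u f, f u ≠ 0 → G u f (V u f) / f u = η⁻¹ := by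
    intro u f h
    have h1 := hlam u f h
    have h2 := hlc u f
    rw [hlΨ u f h] at h2
    have h3 : G u f (V u f) = (G u f (V u f) / f u) * f u := by field_simp
    rw [h3] at h2
    rw [mul_div_assoc, div_self h, mul_one] at h2
    set r := G u f (V u f) / f u
    have h4 : r ^ (N + 1) = η := by
      apply mul_right_cancel₀ h
      linear_combination h2
    rw [← h4]
    have : r * r ^ (N + 1) = 1 := by rw [← h1]; ring
    exact eq_inv_of_mul_eq_one_left this
  set ξ := η⁻¹ with hξ
  have hξη : ξ * η = 1 := inv_mul_cancel₀ hη0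
  have hξ1 : ξ ^ (N + 2) = 1 := by rw [hξ, inv_pow, hη1, inv_one]
  have hξN : ξ ^ N = η ^ 2 := by
    have : ξ ^ N * (ξ * η) ^ 2 = ξ ^ (N + 2) * η ^ 2 := by ring
    rw [hξη, hξ1] at this
    linear_combination this
  have hm : s + t + 1 = N + 2 := by omega
  refine ⟨ξ, by rw [hm, hξ1], ?_⟩
  have hBξ : ∀ u f, f u ≠ 0 → B u f = η ^ 2 • rkOne (V u f) (G u f) := by
    intro u f h
    rw [hBΨ u f h]
    simp only [Ψ]
    rw [hlamη u f h, hξN]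
  have P2 := phase_two A hA1 (fun a => η • (φ a : E →L[ℂ] E))
    (fun v g => by
      obtain ⟨a, ha⟩ := hr1 v (ξ • g)
      refine ⟨a, ?_⟩
      simp only [ha, smul_rk, smul_smul, mul_comm η ξ, hξη, one_smul])
    (ξ • B) (fun u f => by
      obtain ⟨v, g, h⟩ := hBrk u f
      exact ⟨v, ξ • g, by simp only [LinearMap.smul_apply, h, smul_rk]⟩)
    (fun u f a w h ha => by
      have h1 : (φ a : E →L[ℂ] E) = rkOne w (ξ • h) := by
        rw [← smul_rk, ← ha, smul_smul, hξη, one_smul]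
      have := hBRep u f a w _ h1
      simpa using this)
    (fun u f h => by
      have e1 : (φ ⟨rkOne u f, hA1 u f⟩ : E →L[ℂ] E) = rkOne (V u f) (G u f) := hVG u f
      rw [e1, LinearMap.smul_apply, LinearMap.smul_apply, hBξ u f h, smul_smul]
      congr 1
      linear_combination η * hξη)
    (fun u f a h => by
      have e1 : (ξ • B) u f = rkOne (V u f) (η • G u f) := by
        rw [LinearMap.smul_apply, LinearMap.smul_apply, hBξ u f h, smul_smul, smul_rk]
        congr 2
        linear_combination η * hξη
      rw [e1, trOne_mul]
      have h1 := hK u f a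
      have h2 : G u f (V u f) = ξ * f u := by rw [← hlamη u f h]; field_simp
      rw [h2, mul_pow, hξN] at h1
      simp only [smul_apply, map_smul, smul_eq_mul]
      apply mul_left_cancel₀ (pow_ne_zero N h)
      linear_combination h1)
    (fun u f => by
      rw [LinearMap.smul_apply, LinearMap.smul_apply, trOne_smul (hBrk _ _), ← hl, hlc]
      linear_combination f u * hξη)
  have back : ∀ (a : A) (T : E →L[ℂ] E), η • (φ a : E →L[ℂ] E) = T →
      (φ a : E →L[ℂ] E) = ξ • T := by
    intro a T h
    rw [← h, smul_smul, hξη, one_smul]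
  rcases P2 with ⟨S, hS⟩ | ⟨S, hS⟩
  · exact Or.inl ⟨S, fun a => back a _ (hS a)⟩
  · exact Or.inr ⟨S, fun a => back a _ (hS a)⟩

lemma rank_rkOne (v : E) (g : E →L[ℂ] ℂ) :
    LinearMap.rank ((rkOne v g : E →L[ℂ] E) : E →ₗ[ℂ] E) ≤ 1 := by
  have h : LinearMap.range ((rkOne v g : E →L[ℂ] E) : E →ₗ[ℂ] E) ≤ Submodule.span ℂ {v} := by
    rintro _ ⟨x, rfl⟩
    exact Submodule.smul_mem _ _ (Submodule.mem_span_singleton_self v)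
  refine (Submodule.rank_mono h).trans ?_
  refine (rank_span_le _).trans ?_
  simp

lemma rank_rkOne_add (v w : E) (g h : E →L[ℂ] ℂ) :
    LinearMap.rank ((rkOne v g + rkOne w h : E →L[ℂ] E) : E →ₗ[ℂ] E) ≤ 2 := by
  have := LinearMap.rank_add_le ((rkOne v g : E →L[ℂ] E) : E →ₗ[ℂ] E)
    ((rkOne w h : E →L[ℂ] E) : E →ₗ[ℂ] E)
  refine this.trans ((add_le_add (rank_rkOne v g) (rank_rkOne w h)).trans ?_)
  norm_num

lemma word_prod {M : Type*} [Monoid M] (x y : M) : ∀ (m : ℕ) (p : Fin m),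
    (List.ofFn fun j => if j = p then x else y).prod = y ^ (p : ℕ) * x * y ^ (m - 1 - p) := by
  intro m
  induction m with
  | zero => intro p; exact p.elim0
  | succ m ih =>
    intro p
    rw [List.ofFn_succ, List.prod_cons]
    refine Fin.cases ?_ (fun q => ?_) p
    · simp [List.ofFn_const, Fin.succ_ne_zero]
    · have hne : (0 : Fin (m + 1)) ≠ q.succ := (Fin.succ_ne_zero q).symm
      simp only [hne, if_false, Fin.succ_inj, ih q, Fin.val_succ, pow_succ']
      have : m + 1 - 1 - ((q : ℕ) + 1) = m - 1 - q := by omega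
      rw [this]; simp only [mul_assoc]
end Aux

theorem stmt5 {E : Type*} [NormedAddCommGroup E] [NormedSpace ℂ E] [CompleteSpace E]
    (A : Subalgebra ℂ (E →L[ℂ] E))
    -- `A` is a standard operator algebra: it contains every bounded finite-rank operator
    (hA : ∀ T : E →L[ℂ] E, LinearMap.rank (T : E →ₗ[ℂ] E) < ℵ₀ → T ∈ A)
    -- data of the generalized product `T_1 * ⋯ * T_k = T_{i 0} ⋯ T_{i (m-1)}`
    (m k : ℕ) (hk : 2 ≤ k) (i : Fin m → Fin k)
    (hionto : Function.Surjective i)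
    (hp : ∃ p : Fin m, ∀ q : Fin m, q ≠ p → i q ≠ i p)
    (φ : A → A)
    -- the range of `φ` contains all bounded operators of rank at most two
    (hrange : ∀ T : E →L[ℂ] E, LinearMap.rank (T : E →ₗ[ℂ] E) ≤ 2 →
      ∃ a : A, (φ a : E →L[ℂ] E) = T)
    -- operational local automorphism condition for the generalized product
    (hφ : ∀ a : Fin k → A,
      (∃ j : Fin k, LinearMap.rank ((a j : E →L[ℂ] E) : E →ₗ[ℂ] E) ≤ 1) →
      ∃ θ : A → A, IsAlgAutomorphism θ ∧
        (List.ofFn fun j => φ (a (i j))).prod = θ (List.ofFn fun j => a (i j)).prod) :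
    ∃ ξ : ℂ, ξ ^ m = 1 ∧
      ((∃ S : E ≃L[ℂ] E, ∀ a : A,
          (φ a : E →L[ℂ] E) =
            ξ • ((S : E →L[ℂ] E) ∘L (a : E →L[ℂ] E) ∘L (S.symm : E →L[ℂ] E))) ∨
       (∃ S : (E →L[ℂ] ℂ) ≃L[ℂ] E, ∀ a : A,
          (φ a : E →L[ℂ] E) =
            ξ • ((S : (E →L[ℂ] ℂ) →L[ℂ] E) ∘L dualOp (a : E →L[ℂ] E) ∘L
              (S.symm : E →L[ℂ] (E →L[ℂ] ℂ))))) := by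
  have hA1 : ∀ v g, rkOne v g ∈ A := fun v g =>
    hA _ ((rank_rkOne v g).trans_lt Cardinal.one_lt_aleph0)
  obtain ⟨p, hp⟩ := hp
  rcases subsingleton_or_nontrivial E with hE | hE
  · refine ⟨1, one_pow _, Or.inl ⟨ContinuousLinearEquiv.refl ℂ E, fun a => ?_⟩⟩
    ext x
    exact Subsingleton.elim _ _
  have hpl := p.isLt
  obtain ⟨j0, hj0⟩ : ∃ j : Fin k, j ≠ i p := by
    haveI : Nontrivial (Fin k) := Fin.nontrivial_iff_two_le.2 hk
    exact exists_ne _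
  obtain ⟨q0, hq0⟩ := hionto j0
  have hst : 1 ≤ (p : ℕ) + (m - 1 - p) := by
    by_contra hcon
    have hm1 : m = 1 := by omega
    subst hm1
    exact hj0 (by rw [← hq0, Subsingleton.elim q0 p])
  have hm : (p : ℕ) + (m - 1 - p) + 1 = m := by omega
  have hiff : ∀ j, i j = i p ↔ j = p := fun j =>
    ⟨fun h => by by_contra hne; exact hp j hne h, fun h => by rw [h]⟩
  have := core A hA1 p (m - 1 - p) hst φ
    (fun x y h k => hrange _ (rank_rkOne_add x y h k))
    (fun x y hxy => by
      obtain ⟨θ, hθ, he⟩ := hφ (fun j => if j = i p then x else y) (by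
        rcases hxy with ⟨v, g, h⟩ | ⟨v, g, h⟩
        · exact ⟨i p, by simp only [if_true, h]; exact rank_rkOne v g⟩
        · exact ⟨j0, by simp only [hj0, if_false, h]; exact rank_rkOne v g⟩)
      refine ⟨θ, hθ, ?_⟩
      simp only [hiff, apply_ite φ] at he
      rw [word_prod, word_prod] at he
      exact he)
  rw [hm] at this
  exact this
end
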